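/- Let M > M₁(Ω₁) and let u^ε be the strictly k-convex solution of problem (2.1), assumed C² up to ∂B_ε(0). Then there exist constants C₁, C₂ > 0, depending on n, k, Ω₁ and M but independent of ε, such that for every p ∈ ∂B_ε(0), with ν = p/ε the unit normal pointing into Ω^ε, the double normal second derivative satisfies −C₁·(Du^ε(p)·ν)·ε^{−1} ≤ D²u^ε(p)(ν, ν) ≤ C₂·(Du^ε(p)·ν)·ε^{−1}. -/

import Mathlib

open Set Metric Filter Topology Bornology
open scoped RealInnerProductSpace

noncomputable section

/-- Euclidean `n`-space. -/
abbrev Euc (n : ℕ) := EuclideanSpace ℝ (Fin n)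

/-- The `k`-th elementary symmetric polynomial of a vector `lam ∈ ℝⁿ`. -/
def esymmVec {n : ℕ} (k : ℕ) (lam : Fin n → ℝ) : ℝ :=
  ∑ S ∈ Finset.powersetCard k (Finset.univ : Finset (Fin n)), ∏ i ∈ S, lam i

/-- `σ_k(A)`: the `k`-th elementary symmetric polynomial of the eigenvalues of a
symmetric matrix `A` (junk value `0` if `A` is not symmetric). -/
noncomputable def sigmaMat {n : ℕ} (k : ℕ) (A : Matrix (Fin n) (Fin n) ℝ) : ℝ := by
  classical exact if h : A.IsHermitian then esymmVec k h.eigenvalues else 0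

/-- The eigenvalues of the symmetric matrix `A` lie in the Gårding cone
`Γ_k = {λ : σ_j(λ) > 0, j = 1, …, k}`. -/
def InGardingCone {n : ℕ} (k : ℕ) (A : Matrix (Fin n) (Fin n) ℝ) : Prop :=
  ∃ h : A.IsHermitian, ∀ j : ℕ, 1 ≤ j → j ≤ k → 0 < esymmVec j h.eigenvalues

/-- The Hessian matrix of `u` at `x`, with derivatives taken within the set `s`. -/
noncomputable def hessianWithin {n : ℕ} (u : Euc n → ℝ) (s : Set (Euc n)) (x : Euc n) :
    Matrix (Fin n) (Fin n) ℝ :=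
  fun i j => iteratedFDerivWithin ℝ 2 u s x
    ![EuclideanSpace.single i (1:ℝ), EuclideanSpace.single j (1:ℝ)]

/-- The Hessian matrix `D²u(x)` of `u` at `x`. -/
noncomputable def hessian {n : ℕ} (u : Euc n → ℝ) (x : Euc n) : Matrix (Fin n) (Fin n) ℝ :=
  fun i j => iteratedFDeriv ℝ 2 u x
    ![EuclideanSpace.single i (1:ℝ), EuclideanSpace.single j (1:ℝ)]

/-- Operator norm of the Hessian matrix of `u` at `x` (derivatives within `s`). -/
noncomputable def hessOpNormWithin {n : ℕ} (u : Euc n → ℝ) (s : Set (Euc n)) (x : Euc n) : ℝ :=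
  ‖Matrix.toEuclideanCLM (𝕜 := ℝ) (hessianWithin u s x)‖

/-- A set has smooth boundary: it is the sublevel set of a smooth defining function
with nonvanishing differential on the boundary. -/
def HasSmoothBoundary {n : ℕ} (Ω : Set (Euc n)) : Prop :=
  ∃ ρ : Euc n → ℝ, ContDiff ℝ (⊤ : ℕ∞) ρ ∧ Ω = {x | ρ x < 0} ∧
    ∀ x ∈ frontier Ω, fderiv ℝ ρ x ≠ 0

/-- `c_{n,k} = (C(n,k))^{1/k}` where `C(n,k)` is the binomial coefficient. -/
noncomputable def cnk (n k : ℕ) : ℝ := (n.choose k : ℝ) ^ ((1:ℝ)/(k:ℝ))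

/-- The radially symmetric subsolution `|x - x₀|²/(2c_{n,k}) − ε²/(2c_{n,k}) − M`. -/
noncomputable def underSol {n : ℕ} (k : ℕ) (x₀ : Euc n) (ε M : ℝ) (x : Euc n) : ℝ :=
  ‖x - x₀‖^2 / (2 * cnk n k) - ε^2 / (2 * cnk n k) - M

/-- The closed ring `Ω̄^ε = closure (Ω₁ \ B̄_ε(x₀))`. -/
def ringSet {n : ℕ} (Ω₁ : Set (Euc n)) (x₀ : Euc n) (ε : ℝ) : Set (Euc n) :=
  closure (Ω₁ \ closedBall x₀ ε)

/-- `u` is a strictly `k`-convex solution of problem (2.1):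
`σ_k(D²u) = 1` in `Ω^ε = Ω₁ \ B̄_ε(x₀)`, `u = 0` on `∂Ω₁`, `u = −M` on `∂B_ε(x₀)`,
with `u ∈ C²(Ω̄^ε)`. -/
def IsSol {n : ℕ} (k : ℕ) (Ω₁ : Set (Euc n)) (x₀ : Euc n) (ε M : ℝ) (u : Euc n → ℝ) : Prop :=
  ContDiffOn ℝ 2 u (ringSet Ω₁ x₀ ε) ∧
  (∀ x ∈ Ω₁ \ closedBall x₀ ε,
      InGardingCone k (hessianWithin u (ringSet Ω₁ x₀ ε) x) ∧
      sigmaMat k (hessianWithin u (ringSet Ω₁ x₀ ε) x) = 1) ∧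
  (∀ x ∈ frontier Ω₁, u x = 0) ∧
  (∀ x ∈ sphere x₀ ε, u x = -M)

/-- `ψ` is a strictly `k`-convex solution of problem (2.2):
`σ_k(D²ψ) = 1` in `Ω₁`, `ψ = 0` on `∂Ω₁`, with `ψ ∈ C^∞(Ω̄₁)`. -/
def IsSol22 {n : ℕ} (k : ℕ) (Ω₁ : Set (Euc n)) (ψ : Euc n → ℝ) : Prop :=
  ContDiffOn ℝ (⊤ : ℕ∞) ψ (closure Ω₁) ∧
  (∀ x ∈ Ω₁, InGardingCone k (hessianWithin ψ (closure Ω₁) x) ∧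
      sigmaMat k (hessianWithin ψ (closure Ω₁) x) = 1) ∧
  (∀ x ∈ frontier Ω₁, ψ x = 0)

/-- `u` is a strictly `k`-convex solution of the Dirichlet problem on the convex ring
`Ω = Ω₁ \ Ω̄₂`: `σ_k(D²u) = 1` in `Ω`, `u = 0` on `∂Ω₁`, `u = −M` on `∂Ω₂`,
with `u ∈ C²(Ω̄)`. -/
def IsSolRing {n : ℕ} (k : ℕ) (Ω₁ Ω₂ : Set (Euc n)) (M : ℝ) (u : Euc n → ℝ) : Prop :=
  ContDiffOn ℝ 2 u (closure (Ω₁ \ closure Ω₂)) ∧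
  (∀ x ∈ Ω₁ \ closure Ω₂,
      InGardingCone k (hessianWithin u (closure (Ω₁ \ closure Ω₂)) x) ∧
      sigmaMat k (hessianWithin u (closure (Ω₁ \ closure Ω₂)) x) = 1) ∧
  (∀ x ∈ frontier Ω₁, u x = 0) ∧
  (∀ x ∈ frontier Ω₂, u x = -M)

/-- The extension `ũ` of `u`, equal to `−M` on the closed ball `B̄_ε(x₀)`. -/
noncomputable def extendBy {n : ℕ} (u : Euc n → ℝ) (x₀ : Euc n) (ε M : ℝ) (x : Euc n) : ℝ := by
  classical exact if x ∈ closedBall x₀ ε then -M else u x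

/-- The extension `ũ` of `u`, equal to `−M` on the set `Ω₂`. -/
noncomputable def extendOn {n : ℕ} (u : Euc n → ℝ) (Ω₂ : Set (Euc n)) (M : ℝ) (x : Euc n) : ℝ := by
  classical exact if x ∈ Ω₂ then -M else u x

/-- The quadratic polynomial with Hessian `A`, linear part `b` and constant term `c`. -/
noncomputable def quadPoly {n : ℕ} (A : Matrix (Fin n) (Fin n) ℝ) (b : Euc n) (c : ℝ)
    (x : Euc n) : ℝ :=
  (∑ i, ∑ j, A i j * x i * x j) / 2 + ⟪b, x⟫ + c

/-!
Write `ν = p / ε` and `a = u_ν(p) / ε`. Since `u` is constant on the sphere of radius `ε`,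
differentiating twice along its great circles gives `D²u(p)(w, w) = a ‖w‖²` for tangential `w`.

The mixed derivatives are bounded by rotating the solution. If `R` is the rotation by a small angle
`θ`, then `u ∘ R` solves the same equation, and it is compared with the strict subsolution
`(1 - t) u + t (κ (‖x‖² - ε²) / 2 - M)`, where `κ` is slightly larger than `1 / c_{n,k}`. Both equal
`-M` on the inner sphere. Near `∂Ω₁` the quadratic term stays below `0` by a fixed amount because
`M > M₁`, while `u` is bounded below by a multiple of `ψ`, hence by a multiple of the distance to
`∂Ω₁`; so `t = C θ` is enough to order the two functions there. Comparing normal derivatives at `p`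
and letting `θ → 0` gives `|D²u(p)(w, ν)| ≤ C a ‖w‖`.

The lower bound is now `tr D²u(p) ≥ 0`. For the upper bound, `u` lies above
`κ (‖x‖² - ε²) / 2 - M`, so `a ≥ κ`, and `D²u(p) ≥ (a / 2) I + L ν ⊗ ν` with
`L = D²u(p)(ν, ν) - O(a)`. If `L > 0`, monotonicity of `σ_k` gives `L (a / 2)^(k - 1) ≤ σ_k = 1`,
and `1 ≤ C(n, k) a^k`.

That the barrier is a strict subsolution amounts to `σ_k(A + τ I)^(1/k) ≥ σ_k(A)^(1/k) +
σ_k(τ I)^(1/k)`. Both this and the monotonicity of `σ_k` on the Gårding cone follow from the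
real-rootedness of `det (X + A)`: the inequality from the factorization of its derivatives into
linear factors, the monotonicity from Newton's inequalities between consecutive coefficients.
-/

section

open Matrix Polynomial

/-! ### Real-rooted polynomials -/

lemma splits_derivative {p : ℝ[X]} (hp : p.Splits) : (derivative p).Splits := by
  by_cases h0 : p.natDegree = 0
  · rw [derivative_of_natDegree_zero h0]
    exact Splits.zero
  rw [splits_iff_card_roots]
  have := card_roots_le_derivative p
  have := card_roots' (derivative p)
  have := natDegree_derivative_lt h0
  have := hp.natDegree_eq_card_roots
  omega

lemma splits_iterate_derivative {p : ℝ[X]} (hp : p.Splits) (m : ℕ) :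
    (derivative^[m] p).Splits := by
  induction m with
  | zero => simpa
  | succ m ih =>
    rw [Function.iterate_succ_apply']
    exact splits_derivative ih

lemma eval_mul_eval_derivative_two_le_sq {p : ℝ[X]} (hp : p.Splits) (x : ℝ) :
    p.eval x * (derivative^[2] p).eval x ≤ (derivative p).eval x ^ 2 := by
  have key (s : Multiset ℝ) : (s.map (X - C ·)).prod.eval x *
      (derivative (derivative (s.map (X - C ·)).prod)).eval x ≤
      (derivative (s.map (X - C ·)).prod).eval x ^ 2 := by
    induction s using Multiset.induction with
    | empty => simp
    | cons a s ih =>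
      simp only [Multiset.map_cons, Multiset.prod_cons, derivative_mul, derivative_sub,
        derivative_X, derivative_C, derivative_add, sub_zero, one_mul, eval_mul, eval_add, eval_sub,
        eval_X, eval_C] at ih ⊢
      set g := (Multiset.map (fun x => X - C x) s).prod
      nlinarith [sq_nonneg (g.eval x), mul_nonneg (sq_nonneg (x - a)) (sub_nonneg.2 ih)]
  rw [hp.eq_prod_roots]
  simp only [Function.iterate_succ_apply, Function.iterate_zero_apply, derivative_mul,
    derivative_C, zero_mul, zero_add, eval_mul, eval_C]
  nlinarith [mul_nonneg (sq_nonneg p.leadingCoeff) (sub_nonneg.2 (key p.roots))]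

lemma coeff_mul_coeff_add_two_le_sq {q : ℝ[X]} (hq : q.Splits) (m : ℕ) :
    q.coeff m * q.coeff (m + 2) ≤ q.coeff (m + 1) ^ 2 := by
  have laguerre := eval_mul_eval_derivative_two_le_sq (splits_iterate_derivative hq m) 0
  rw [← Function.iterate_add_apply, ← Function.iterate_succ_apply' (f := derivative),
    add_comm 2 m] at laguerre
  simp only [← coeff_zero_eq_eval_zero, coeff_iterate_derivative, zero_add,
    Nat.descFactorial_self, nsmul_eq_mul, Nat.succ_eq_add_one, Nat.factorial_succ, Nat.cast_mul,
    Nat.cast_add, Nat.cast_one] at laguerre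
  rcases le_or_gt (q.coeff m * q.coeff (m + 2)) 0 with h | h
  · exact h.trans (sq_nonneg _)
  have hc : (0 : ℝ) < (m.factorial : ℝ) ^ 2 * (m + 1) := by positivity
  have weighted : (m + 2) * (q.coeff m * q.coeff (m + 2)) ≤ (m + 1) * q.coeff (m + 1) ^ 2 :=
    le_of_mul_le_mul_left (by linarith) hc
  have hm : (0 : ℝ) < m + 1 := by positivity
  exact le_of_mul_le_mul_left (by linarith) hm

/-- In terms of the eigenvalues: deleting an entry of a vector of `Γ_k` leaves a vector of
`Γ_{k-1}`. -/
lemma coeff_pos_of_X_add_C_mul {q : ℝ[X]} (hq : q.Splits) (hmonic : q.Monic) (a : ℝ) {m₀ m : ℕ}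
    (hpos : ∀ m, m₀ ≤ m → m ≤ q.natDegree + 1 → 0 < ((X + C a) * q).coeff m)
    (hm : m ≤ q.natDegree) : m₀ ≤ m → 0 < q.coeff m := by
  induction hm using Nat.decreasingInduction with
  | self =>
    intro
    rw [hmonic.coeff_natDegree]
    exact one_pos
  | of_succ m hm ih =>
    intro hm₀
    have next_pos := ih (by omega)
    have upper := hpos (m + 1) (by omega) (by omega)
    have lower := hpos m hm₀ (by omega)
    by_contra! hneg
    rw [add_mul, coeff_add, coeff_X_mul, coeff_C_mul] at upper
    have ha : 0 < a := by
      by_contra! ha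
      nlinarith [mul_nonneg (neg_nonneg.2 ha) next_pos.le]
    cases m with
    | zero =>
      rw [add_mul, coeff_add, coeff_C_mul, mul_coeff_zero, coeff_X_zero] at lower
      nlinarith
    | succ j =>
      rw [add_mul, coeff_add, coeff_X_mul, coeff_C_mul] at lower
      nlinarith [coeff_mul_coeff_add_two_le_sq hq j, mul_pos lower next_pos,
        mul_nonneg (neg_nonneg.2 hneg) upper.le]

lemma geom_mean_add_geom_mean_le {ι : Type*} (s : Finset ι) (w x y : ι → ℝ)
    (hw : ∀ i ∈ s, 0 ≤ w i) (hw₁ : ∑ i ∈ s, w i = 1) (hx : ∀ i ∈ s, 0 ≤ x i)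
    (hy : ∀ i ∈ s, 0 ≤ y i) (hxy : ∀ i ∈ s, 0 < x i + y i) :
    ∏ i ∈ s, x i ^ w i + ∏ i ∈ s, y i ^ w i ≤ ∏ i ∈ s, (x i + y i) ^ w i := by
  have amgm (z : ι → ℝ) (hz : ∀ i ∈ s, 0 ≤ z i) :
      (∏ i ∈ s, z i ^ w i) / ∏ i ∈ s, (x i + y i) ^ w i ≤ ∑ i ∈ s, w i * (z i / (x i + y i)) := by
    rw [← Finset.prod_div_distrib]
    calc ∏ i ∈ s, z i ^ w i / (x i + y i) ^ w i = ∏ i ∈ s, (z i / (x i + y i)) ^ w i :=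
          Finset.prod_congr rfl fun i hi => (Real.div_rpow (hz i hi) (hxy i hi).le _).symm
      _ ≤ ∑ i ∈ s, w i * (z i / (x i + y i)) := Real.geom_mean_le_arith_mean_weighted s w _ hw hw₁
          fun i hi => div_nonneg (hz i hi) (hxy i hi).le
  have total : ∑ i ∈ s, w i * (x i / (x i + y i)) + ∑ i ∈ s, w i * (y i / (x i + y i)) = 1 := by
    rw [← Finset.sum_add_distrib, ← hw₁]
    refine Finset.sum_congr rfl fun i hi => ?_
    rw [← mul_add, ← add_div, div_self (hxy i hi).ne', mul_one]
  have hD : 0 < ∏ i ∈ s, (x i + y i) ^ w i :=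
    Finset.prod_pos fun i hi => Real.rpow_pos_of_pos (hxy i hi) _
  rw [← div_le_one hD, add_div]
  linarith [amgm x hx, amgm y hy]

lemma add_pow_card_le_prod_add {s : Multiset ℝ} (hs : ∀ x ∈ s, 0 < x) {τ g : ℝ} (hτ : 0 ≤ τ)
    (hg : 0 ≤ g) (hprod : s.prod = g ^ s.card) :
    (τ + g) ^ s.card ≤ (s.map (τ + ·)).prod := by
  rcases eq_or_ne s 0 with rfl | hne
  · simp
  have hcard : s.card ≠ 0 := by simpa using hne
  have hpos (i : s) : 0 < (i : ℝ) := hs _ (Multiset.coe_mem)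
  have mahler := geom_mean_add_geom_mean_le Finset.univ (fun _ : s => (s.card : ℝ)⁻¹)
    (fun _ => τ) (fun i => (i : ℝ)) (fun _ _ => by positivity) (by simp [hcard])
    (fun _ _ => hτ) (fun i _ => (hpos i).le) (fun i _ => by linarith [hpos i])
  rw [Real.finsetProd_rpow _ _ fun _ _ => hτ, Real.finsetProd_rpow _ _ fun i _ => (hpos i).le,
    Real.finsetProd_rpow _ _ fun i _ => by linarith [hpos i], ← Multiset.prod_eq_prod_coe, hprod,
    Finset.prod_const, Finset.card_univ, Multiset.card_coe, Real.pow_rpow_inv_natCast hτ hcard,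
    Real.pow_rpow_inv_natCast hg hcard] at mahler
  have hprod_eq : (s.map (τ + ·)).prod = ∏ i : s, (τ + (i : ℝ)) := by
    rw [← Multiset.map_univ s (τ + ·)]
    rfl
  have hnonneg : 0 ≤ ∏ i : s, (τ + (i : ℝ)) :=
    Finset.prod_nonneg fun i _ => by linarith [hpos i]
  rw [hprod_eq, ← Real.rpow_inv_natCast_pow hnonneg hcard]
  gcongr

lemma root_neg_of_coeff_pos {f : ℝ[X]} (hpos : ∀ j ≤ f.natDegree, 0 < f.coeff j) {r : ℝ}
    (hr : f.IsRoot r) : r < 0 := by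
  by_contra! hr0
  have hsum : f.eval r = 0 := hr
  rw [eval_eq_sum_range, Finset.sum_range_succ', pow_zero, mul_one] at hsum
  have htail : 0 ≤ ∑ j ∈ Finset.range f.natDegree, f.coeff (j + 1) * r ^ (j + 1) :=
    Finset.sum_nonneg fun j hj =>
      mul_nonneg (hpos _ (Finset.mem_range.1 hj)).le (pow_nonneg hr0 _)
  linarith [hpos 0 (Nat.zero_le _)]

lemma leadingCoeff_mul_add_pow_le_eval {f : ℝ[X]} (hf : f.Splits)
    (hpos : ∀ j ≤ f.natDegree, 0 < f.coeff j) {τ g : ℝ} (hτ : 0 ≤ τ) (hg : 0 ≤ g)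
    (h0 : f.eval 0 = f.leadingCoeff * g ^ f.natDegree) :
    f.leadingCoeff * (τ + g) ^ f.natDegree ≤ f.eval τ := by
  have hlead : 0 < f.leadingCoeff := hpos _ le_rfl
  have heval (x : ℝ) : f.eval x = f.leadingCoeff * ((f.roots.map (-·)).map (x + ·)).prod := by
    conv_lhs => rw [hf.eq_prod_roots]
    simp [eval_multiset_prod, Multiset.map_map, sub_eq_add_neg]
  have hcard : (f.roots.map (-·)).card = f.natDegree := by
    rw [Multiset.card_map, hf.natDegree_eq_card_roots]
  have hprod : (f.roots.map (-·)).prod = g ^ f.natDegree := by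
    rw [heval 0] at h0
    simpa using mul_left_cancel₀ hlead.ne' h0
  have hroots : ∀ x ∈ f.roots.map (-·), 0 < x := by
    intro x hx
    obtain ⟨r, hr, rfl⟩ := Multiset.mem_map.1 hx
    exact neg_pos.2 (root_neg_of_coeff_pos hpos (isRoot_of_mem_roots hr))
  rw [heval τ]
  gcongr
  simpa only [hcard] using add_pow_card_le_prod_add hroots hτ hg (by rw [hcard, hprod])

lemma natDegree_iterate_derivative_of_le (p : ℝ[X]) {m : ℕ} (hm : m ≤ p.natDegree) :
    (derivative^[m] p).natDegree = p.natDegree - m := by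
  rcases eq_or_ne p 0 with rfl | hp
  · simp
  refine le_antisymm (natDegree_iterate_derivative p m) (le_natDegree_of_ne_zero ?_)
  rw [coeff_iterate_derivative, Nat.sub_add_cancel hm, nsmul_eq_mul]
  have : 0 < p.natDegree.descFactorial m := Nat.descFactorial_pos.2 hm
  exact mul_ne_zero (by positivity) (leadingCoeff_ne_zero.2 hp)

lemma choose_mul_add_pow_le_coeff_taylor {p : ℝ[X]} (hp : p.Splits) (hmonic : p.Monic) {m₀ : ℕ}
    (hm₀ : m₀ ≤ p.natDegree) (hpos : ∀ m, m₀ ≤ m → m ≤ p.natDegree → 0 < p.coeff m) {τ g : ℝ}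
    (hτ : 0 ≤ τ) (hg : 0 ≤ g)
    (hcoeff : p.coeff m₀ = p.natDegree.choose m₀ * g ^ (p.natDegree - m₀)) :
    p.natDegree.choose m₀ * (τ + g) ^ (p.natDegree - m₀) ≤ (taylor τ p).coeff m₀ := by
  set f := derivative^[m₀] p with hf
  have hdeg : f.natDegree = p.natDegree - m₀ := natDegree_iterate_derivative_of_le p hm₀
  have hfact : (0 : ℝ) < m₀.factorial := by positivity
  have hlead : f.leadingCoeff = m₀.factorial * p.natDegree.choose m₀ := by
    rw [leadingCoeff, hdeg, hf, coeff_iterate_derivative, Nat.sub_add_cancel hm₀,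
      hmonic.coeff_natDegree, Nat.descFactorial_eq_factorial_mul_choose]
    simp
  have htaylor (x : ℝ) : f.eval x = m₀.factorial * (taylor x p).coeff m₀ := by
    rw [taylor_coeff, hf, ← factorial_smul_hasseDeriv]
    simp
  have hfpos : ∀ j ≤ f.natDegree, 0 < f.coeff j := by
    intro j hj
    rw [hf, coeff_iterate_derivative, nsmul_eq_mul]
    have : 0 < (j + m₀).descFactorial m₀ := Nat.descFactorial_pos.2 (by omega)
    exact mul_pos (by positivity) (hpos _ (by omega) (by omega))
  have hf0 : f.eval 0 = f.leadingCoeff * g ^ f.natDegree := by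
    rw [htaylor, taylor_zero, hcoeff, hlead, hdeg, mul_assoc]
  have := leadingCoeff_mul_add_pow_le_eval (splits_iterate_derivative hp m₀) hfpos hτ hg hf0
  rw [htaylor, hlead, hdeg, mul_assoc] at this
  exact le_of_mul_le_mul_left this hfact

/-! ### Elementary symmetric functions of matrices and the Gårding cone -/

section SigmaPoly

variable {ι : Type*} [Fintype ι] [DecidableEq ι]

/-- The polynomial `det (X + A) = ∑ j, σ_j(A) X ^ (n - j)` generating the elementary symmetric
functions of the eigenvalues of `A`. Its coefficients are polynomials in the entries of `A`, which
gives access to `σ_j` without diagonalizing. -/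
def sigmaPoly (A : Matrix ι ι ℝ) : ℝ[X] := (-A).charpoly

lemma eval_sigmaPoly (A : Matrix ι ι ℝ) (x : ℝ) : (sigmaPoly A).eval x = (x • 1 + A).det := by
  rw [sigmaPoly, Matrix.eval_charpoly, sub_neg_eq_add, Matrix.smul_one_eq_diagonal]
  rfl

lemma sigmaPoly_monic (A : Matrix ι ι ℝ) : (sigmaPoly A).Monic := charpoly_monic _

lemma natDegree_sigmaPoly (A : Matrix ι ι ℝ) : (sigmaPoly A).natDegree = Fintype.card ι :=
  charpoly_natDegree_eq_dim _

lemma continuous_coeff_sigmaPoly (m : ℕ) :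
    Continuous fun A : Matrix ι ι ℝ => (sigmaPoly A).coeff m := by
  have heval (A : Matrix ι ι ℝ) : (sigmaPoly A).coeff m =
      MvPolynomial.eval (fun ij : ι × ι => (-A) ij.1 ij.2) ((charpoly.univ ℝ ι).coeff m) :=
    (charpoly.univ_coeff_eval₂Hom (n := ι) (RingHom.id ℝ) (fun ij : ι × ι => (-A) ij.1 ij.2) m).symm
  simp_rw [heval]
  exact (MvPolynomial.continuous_eval _).comp (by fun_prop)

lemma sigmaPoly_conj (A : Matrix ι ι ℝ) {R : Matrix ι ι ℝ} (hR : Rᵀ * R = 1) :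
    sigmaPoly (Rᵀ * A * R) = sigmaPoly A := by
  rw [sigmaPoly, sigmaPoly, Matrix.mul_assoc, ← Matrix.mul_neg, charpoly_mul_comm,
    ← Matrix.neg_mul, Matrix.mul_assoc, mul_eq_one_comm.1 hR, Matrix.mul_one]

lemma sigmaPoly_add_smul_one (A : Matrix ι ι ℝ) (τ : ℝ) :
    sigmaPoly (A + τ • 1) = taylor τ (sigmaPoly A) := by
  refine Polynomial.funext fun x => ?_
  rw [taylor_eval, eval_sigmaPoly, eval_sigmaPoly, add_smul, add_assoc, add_comm A]

lemma coeff_sigmaPoly_smul (A : Matrix ι ι ℝ) {r : ℝ} (hr : r ≠ 0) {m : ℕ}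
    (hm : m ≤ Fintype.card ι) :
    (sigmaPoly (r • A)).coeff m = r ^ (Fintype.card ι - m) * (sigmaPoly A).coeff m := by
  have hcomp : (sigmaPoly (r • A)).comp (C r * X) = C (r ^ Fintype.card ι) * sigmaPoly A := by
    refine Polynomial.funext fun x => ?_
    rw [eval_comp, eval_sigmaPoly, eval_mul, eval_mul, eval_C, eval_X, eval_C, eval_sigmaPoly,
      ← det_smul, smul_add, smul_smul]
  have hcoeff := congrArg (coeff · m) hcomp
  simp only [comp_C_mul_X_coeff, coeff_C_mul] at hcoeff
  refine mul_right_cancel₀ (pow_ne_zero m hr) ?_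
  rw [hcoeff, mul_right_comm, ← pow_add, Nat.sub_add_cancel hm]

lemma sigmaPoly_diagonal (d : ι → ℝ) : sigmaPoly (diagonal d) = ∏ i, (X + C (d i)) := by
  rw [sigmaPoly, diagonal_neg, charpoly_diagonal]
  simp

lemma sigmaPoly_smul_one (κ : ℝ) :
    sigmaPoly (κ • (1 : Matrix ι ι ℝ)) = (X + C κ) ^ Fintype.card ι := by
  rw [Matrix.smul_one_eq_diagonal, sigmaPoly_diagonal]
  simp

lemma det_diagonal_add_vecMulVec {d : ι → ℝ} (hd : ∀ i, d i ≠ 0) (c : ι → ℝ) :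
    (diagonal d + vecMulVec c c).det =
      ∏ i, d i + ∑ i, c i ^ 2 * ∏ j ∈ Finset.univ.erase i, d j := by
  have hinv : (diagonal d)⁻¹ = diagonal fun i => (d i)⁻¹ :=
    Matrix.inv_eq_left_inv (by simp [diagonal_mul_diagonal, hd])
  have hunit : IsUnit (diagonal d).det := by
    rw [det_diagonal, isUnit_iff_ne_zero]
    exact Finset.prod_ne_zero_iff.2 fun i _ => hd i
  have hscalar : (1 + replicateRow Unit c * (diagonal d)⁻¹ * replicateCol Unit c).det =
      1 + ∑ i, c i ^ 2 * (d i)⁻¹ := by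
    rw [hinv, det_unique, Matrix.add_apply, one_apply_eq, Matrix.mul_apply]
    congr 1
    refine Finset.sum_congr rfl fun i _ => ?_
    simp only [mul_diagonal, replicateRow_apply, replicateCol_apply]
    ring
  rw [vecMulVec_eq Unit, det_add_replicateCol_mul_replicateRow hunit, hscalar, det_diagonal,
    mul_add, mul_one, Finset.mul_sum]
  congr 1
  refine Finset.sum_congr rfl fun i _ => ?_
  rw [← Finset.mul_prod_erase Finset.univ _ (Finset.mem_univ i)]
  field_simp [hd i]

lemma sigmaPoly_diagonal_add_vecMulVec (d c : ι → ℝ) :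
    sigmaPoly (diagonal d + vecMulVec c c) =
      ∏ i, (X + C (d i)) + ∑ i, C (c i ^ 2) * ∏ j ∈ Finset.univ.erase i, (X + C (d j)) := by
  refine eq_of_infinite_eval_eq _ _ ((Set.finite_range fun i => -d i).infinite_compl.mono ?_)
  intro x hx
  have hne (i : ι) : x + d i ≠ 0 := fun h => hx ⟨i, by simp only; linarith⟩
  rw [Set.mem_ofPred_eq, eval_sigmaPoly, ← add_assoc, Matrix.smul_one_eq_diagonal, diagonal_add,
    det_diagonal_add_vecMulVec hne]
  simp [eval_prod, eval_finsetSum]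

lemma exists_orthogonal_diagonalization {A : Matrix ι ι ℝ} (hA : A.IsHermitian) :
    ∃ R : Matrix ι ι ℝ, Rᵀ * R = 1 ∧ A = Rᵀ * diagonal hA.eigenvalues * R := by
  refine ⟨star (hA.eigenvectorUnitary : Matrix ι ι ℝ), ?_, ?_⟩
  · simpa [star_eq_conjTranspose] using Unitary.coe_mul_star_self hA.eigenvectorUnitary
  · have := hA.spectral_theorem
    rw [Unitary.conjStarAlgAut_apply] at this
    simpa [star_eq_conjTranspose, Function.comp_def] using this

lemma sigmaPoly_eq_prod_eigenvalues {A : Matrix ι ι ℝ} (hA : A.IsHermitian) :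
    sigmaPoly A = ∏ i, (X + C (hA.eigenvalues i)) := by
  obtain ⟨R, hR, hdiag⟩ := exists_orthogonal_diagonalization hA
  conv_lhs => rw [hdiag]
  rw [sigmaPoly_conj _ hR, sigmaPoly_diagonal]

lemma sigmaPoly_splits {A : Matrix ι ι ℝ} (hA : A.IsHermitian) : (sigmaPoly A).Splits := by
  rw [sigmaPoly_eq_prod_eigenvalues hA]
  exact Splits.prod fun i _ => Splits.X_add_C _

lemma exists_sigmaPoly_add_vecMulVec {A : Matrix ι ι ℝ} (hA : A.IsHermitian) (v : ι → ℝ) :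
    ∃ c : ι → ℝ, sigmaPoly (A + vecMulVec v v) = sigmaPoly A +
      ∑ i, C (c i ^ 2) * ∏ j ∈ Finset.univ.erase i, (X + C (hA.eigenvalues j)) := by
  obtain ⟨R, hR, hdiag⟩ := exists_orthogonal_diagonalization hA
  refine ⟨R *ᵥ v, ?_⟩
  have hv : vecMulVec v v = Rᵀ * vecMulVec (R *ᵥ v) (R *ᵥ v) * R := by
    rw [Matrix.mul_vecMulVec, Matrix.vecMulVec_mul, ← Matrix.mulVec_transpose,
      Matrix.mulVec_mulVec, hR, Matrix.one_mulVec]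
  rw [sigmaPoly_eq_prod_eigenvalues hA, ← sigmaPoly_diagonal_add_vecMulVec,
    ← sigmaPoly_conj (Matrix.diagonal _ + _) hR, Matrix.mul_add, Matrix.add_mul, ← hdiag, ← hv]

lemma coeff_prod_erase_nonneg {d : ι → ℝ} {m₀ : ℕ}
    (hpos : ∀ m, m₀ ≤ m → m ≤ Fintype.card ι → 0 < (∏ i, (X + C (d i))).coeff m) (i : ι) {m : ℕ}
    (hm : m₀ ≤ m) : 0 ≤ (∏ j ∈ Finset.univ.erase i, (X + C (d j))).coeff m := by
  set q := ∏ j ∈ Finset.univ.erase i, (X + C (d j)) with hq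
  have hmonic : q.Monic := monic_prod_of_monic _ _ fun j _ => monic_X_add_C _
  have hdeg : q.natDegree + 1 = Fintype.card ι := by
    rw [hq, natDegree_prod_of_monic _ _ fun j _ => monic_X_add_C _]
    simp only [natDegree_X_add_C, Finset.sum_const, smul_eq_mul, mul_one,
      Finset.card_erase_add_one (Finset.mem_univ i), Finset.card_univ]
  have hsplits : q.Splits := Splits.prod fun j _ => Splits.X_add_C _
  have hfactor : (X + C (d i)) * q = ∏ j, (X + C (d j)) :=
    Finset.mul_prod_erase Finset.univ (fun j => X + C (d j)) (Finset.mem_univ i)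
  rcases le_or_gt m q.natDegree with hle | hgt
  · exact (coeff_pos_of_X_add_C_mul hsplits hmonic (d i)
      (fun m h h' => by rw [hfactor]; exact hpos m h (by omega)) hle hm).le
  · rw [coeff_eq_zero_of_natDegree_lt hgt]

lemma coeff_sigmaPoly_le_add_vecMulVec {A : Matrix ι ι ℝ} (hA : A.IsHermitian) {m₀ : ℕ}
    (hpos : ∀ m, m₀ ≤ m → m ≤ Fintype.card ι → 0 < (sigmaPoly A).coeff m) (v : ι → ℝ) {m : ℕ}
    (hm : m₀ ≤ m) : (sigmaPoly A).coeff m ≤ (sigmaPoly (A + vecMulVec v v)).coeff m := by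
  obtain ⟨c, hc⟩ := exists_sigmaPoly_add_vecMulVec hA v
  rw [sigmaPoly_eq_prod_eigenvalues hA] at hpos
  rw [hc, coeff_add, finsetSum_coeff]
  refine le_add_of_nonneg_right (Finset.sum_nonneg fun i _ => ?_)
  rw [coeff_C_mul]
  exact mul_nonneg (sq_nonneg _) (coeff_prod_erase_nonneg hpos i hm)

end SigmaPoly

section GardingCone

variable {n k : ℕ} {A B : Matrix (Fin n) (Fin n) ℝ}

lemma esymmVec_eigenvalues_eq_coeff (hA : A.IsHermitian) (hk : k ≤ n) :
    esymmVec k hA.eigenvalues = (sigmaPoly A).coeff (n - k) := by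
  rw [sigmaPoly_eq_prod_eigenvalues hA, Finset.prod_X_add_C_coeff _ _ (by simp)]
  simp only [esymmVec, Finset.card_univ, Fintype.card_fin, Nat.sub_sub_self hk]

lemma coeff_sigmaPoly_dim (A : Matrix (Fin n) (Fin n) ℝ) : (sigmaPoly A).coeff n = 1 := by
  simpa [natDegree_sigmaPoly] using (sigmaPoly_monic A).coeff_natDegree

lemma sigmaMat_eq_coeff (hA : A.IsHermitian) (hk : k ≤ n) :
    sigmaMat k A = (sigmaPoly A).coeff (n - k) := by
  rw [← esymmVec_eigenvalues_eq_coeff hA hk, sigmaMat, dif_pos hA]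

lemma inGardingCone_iff : InGardingCone k A ↔
    k ≤ n ∧ A.IsHermitian ∧ ∀ m, n - k ≤ m → m ≤ n → 0 < (sigmaPoly A).coeff m := by
  constructor
  · rintro ⟨hA, hpos⟩
    have hkn : k ≤ n := by
      by_contra! hkn
      have := hpos (n + 1) (by omega) (by omega)
      simp [esymmVec, Finset.powersetCard_eq_empty.2] at this
    refine ⟨hkn, hA, fun m hm hmn => ?_⟩
    rcases hmn.eq_or_lt with rfl | hmn
    · rw [coeff_sigmaPoly_dim]
      exact one_pos
    · have := hpos (n - m) (by omega) (by omega)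
      rwa [esymmVec_eigenvalues_eq_coeff hA (by omega), Nat.sub_sub_self hmn.le] at this
  · rintro ⟨hkn, hA, hpos⟩
    refine ⟨hA, fun j _ hjk => ?_⟩
    rw [esymmVec_eigenvalues_eq_coeff hA (by omega)]
    exact hpos _ (by omega) (by omega)

namespace InGardingCone

lemma isHermitian (hA : InGardingCone k A) : A.IsHermitian := hA.1

lemma le_dim (hA : InGardingCone k A) : k ≤ n := (inGardingCone_iff.1 hA).1

lemma trace_pos (hk : 1 ≤ k) (hA : InGardingCone k A) : 0 < A.trace := by
  obtain ⟨hH, hpos⟩ := hA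
  have := hpos 1 le_rfl hk
  rw [esymmVec, Finset.powersetCard_one] at this
  rw [hH.trace_eq_sum_eigenvalues]
  simpa using this

lemma add_vecMulVec (hA : InGardingCone k A) (v : Fin n → ℝ) :
    InGardingCone k (A + vecMulVec v v) ∧ sigmaMat k A ≤ sigmaMat k (A + vecMulVec v v) := by
  obtain ⟨hkn, hH, hpos⟩ := inGardingCone_iff.1 hA
  have hH' : (A + vecMulVec v v).IsHermitian := by
    refine hH.add ?_
    ext i j
    simp [vecMulVec_apply, mul_comm]
  have hle {m : ℕ} (hm : n - k ≤ m) :=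
    coeff_sigmaPoly_le_add_vecMulVec hH (by simpa using hpos) v hm
  refine ⟨inGardingCone_iff.2 ⟨hkn, hH', fun m hm hmn => (hpos m hm hmn).trans_le (hle hm)⟩, ?_⟩
  rw [sigmaMat_eq_coeff hH hkn, sigmaMat_eq_coeff hH' hkn]
  exact hle le_rfl

lemma add_posSemidef (hA : InGardingCone k A) {P : Matrix (Fin n) (Fin n) ℝ} (hP : P.PosSemidef) :
    InGardingCone k (A + P) ∧ sigmaMat k A ≤ sigmaMat k (A + P) := by
  obtain ⟨N, v, rfl⟩ := posSemidef_iff_eq_sum_vecMulVec.1 hP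
  have (s : Finset (Fin N)) : InGardingCone k (A + ∑ i ∈ s, vecMulVec (v i) (star (v i))) ∧
      sigmaMat k A ≤ sigmaMat k (A + ∑ i ∈ s, vecMulVec (v i) (star (v i))) := by
    induction s using Finset.induction_on with
    | empty => simpa using hA
    | insert i s hi ih =>
      rw [Finset.sum_insert hi, add_comm (vecMulVec _ _), ← add_assoc, star_trivial]
      exact ⟨(ih.1.add_vecMulVec _).1, ih.2.trans (ih.1.add_vecMulVec _).2⟩
  exact this _

lemma sigmaMat_le (hA : InGardingCone k A) (hAB : (B - A).PosSemidef) :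
    sigmaMat k A ≤ sigmaMat k B := by
  simpa using (hA.add_posSemidef hAB).2

lemma smul (hA : InGardingCone k A) {r : ℝ} (hr : 0 < r) :
    InGardingCone k (r • A) ∧ sigmaMat k (r • A) = r ^ k * sigmaMat k A := by
  obtain ⟨hkn, hH, hpos⟩ := inGardingCone_iff.1 hA
  have hH' : (r • A).IsHermitian := hH.smul (IsSelfAdjoint.all r)
  have hcoeff {m : ℕ} (hm : m ≤ n) :
      (sigmaPoly (r • A)).coeff m = r ^ (n - m) * (sigmaPoly A).coeff m := by
    simpa using coeff_sigmaPoly_smul A hr.ne' (m := m) (by simpa using hm)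
  refine ⟨inGardingCone_iff.2 ⟨hkn, hH', fun m hm hmn => ?_⟩, ?_⟩
  · have := hpos m hm hmn
    rw [hcoeff hmn]
    positivity
  · rw [sigmaMat_eq_coeff hH hkn, sigmaMat_eq_coeff hH' hkn, hcoeff (Nat.sub_le n k),
      Nat.sub_sub_self hkn]

lemma choose_mul_add_pow_le_sigmaMat (hA : InGardingCone k A) {τ g : ℝ} (hτ : 0 ≤ τ) (hg : 0 ≤ g)
    (hσ : sigmaMat k A = n.choose k * g ^ k) :
    n.choose k * (τ + g) ^ k ≤ sigmaMat k (A + τ • 1) := by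
  obtain ⟨hkn, hH, hpos⟩ := inGardingCone_iff.1 hA
  have hdeg : (sigmaPoly A).natDegree = n := by rw [natDegree_sigmaPoly, Fintype.card_fin]
  have hchoose : ((sigmaPoly A).natDegree.choose (n - k) : ℝ) = n.choose k := by
    rw [hdeg, Nat.choose_symm hkn]
  have hexp : (sigmaPoly A).natDegree - (n - k) = k := by rw [hdeg, Nat.sub_sub_self hkn]
  have := choose_mul_add_pow_le_coeff_taylor (sigmaPoly_splits hH) (sigmaPoly_monic A)
    (m₀ := n - k) (by omega) (fun m hm hmn => hpos m hm (by omega)) hτ hg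
    (by rw [hchoose, hexp, ← hσ, sigmaMat_eq_coeff hH hkn])
  have hP := (hA.add_posSemidef (PosSemidef.one.smul hτ)).1.isHermitian
  rwa [hchoose, hexp, ← sigmaPoly_add_smul_one, ← sigmaMat_eq_coeff hP hkn] at this

end InGardingCone

lemma sigmaMat_conj (hA : A.IsHermitian) (hk : k ≤ n)
    {R : Matrix (Fin n) (Fin n) ℝ} (hR : Rᵀ * R = 1) : sigmaMat k (Rᵀ * A * R) = sigmaMat k A := by
  have hH : (Rᵀ * A * R).IsHermitian := by simpa using isHermitian_conjTranspose_mul_mul R hA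
  rw [sigmaMat_eq_coeff hH hk, sigmaMat_eq_coeff hA hk, sigmaPoly_conj A hR]

lemma continuousOn_sigmaMat (hk : k ≤ n) :
    ContinuousOn (sigmaMat k) {A : Matrix (Fin n) (Fin n) ℝ | A.IsHermitian} :=
  (continuous_coeff_sigmaPoly (n - k)).continuousOn.congr fun _ hA => sigmaMat_eq_coeff hA hk

lemma isHermitian_smul_one (κ : ℝ) : (κ • (1 : Matrix (Fin n) (Fin n) ℝ)).IsHermitian :=
  isHermitian_one.smul (IsSelfAdjoint.all κ)

lemma sigmaMat_smul_one (hk : k ≤ n) (κ : ℝ) :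
    sigmaMat k (κ • (1 : Matrix (Fin n) (Fin n) ℝ)) = n.choose k * κ ^ k := by
  rw [sigmaMat_eq_coeff (isHermitian_smul_one κ) hk, sigmaPoly_smul_one, coeff_X_add_C_pow,
    Fintype.card_fin, Nat.sub_sub_self hk, Nat.choose_symm hk, mul_comm]

lemma inGardingCone_smul_one (hk : k ≤ n) {κ : ℝ} (hκ : 0 < κ) :
    InGardingCone k (κ • (1 : Matrix (Fin n) (Fin n) ℝ)) := by
  refine inGardingCone_iff.2 ⟨hk, isHermitian_smul_one κ, fun m _ hmn => ?_⟩
  rw [sigmaPoly_smul_one, coeff_X_add_C_pow, Fintype.card_fin]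
  have := Nat.choose_pos hmn
  positivity

lemma sigmaMat_smul_one_add_vecMulVec (hk : 1 ≤ k) (hkn : k ≤ n) {κ : ℝ} (hκ : 0 < κ)
    (c : Fin n → ℝ) : sigmaMat k (κ • (1 : Matrix (Fin n) (Fin n) ℝ) + vecMulVec c c) =
      n.choose k * κ ^ k + (∑ i, c i ^ 2) * ((n - 1).choose (k - 1) * κ ^ (k - 1)) := by
  have hH := ((inGardingCone_smul_one hkn hκ).add_vecMulVec c).1.isHermitian
  rw [sigmaMat_eq_coeff hH hkn, Matrix.smul_one_eq_diagonal, sigmaPoly_diagonal_add_vecMulVec]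
  simp only [Finset.prod_const, Finset.card_univ, Fintype.card_fin, Finset.mem_univ,
    Finset.card_erase_of_mem, ← Finset.sum_mul, ← map_sum, coeff_add, coeff_C_mul,
    coeff_X_add_C_pow]
  rw [Nat.sub_sub_self hkn, Nat.choose_symm hkn, show n - 1 - (n - k) = k - 1 by omega,
    ← Nat.choose_symm (show k - 1 ≤ n - 1 by omega), show n - 1 - (k - 1) = n - k by omega]
  ring

lemma InGardingCone.one_lt_sigmaMat_convex_comb (hk : 1 ≤ k) (hA : InGardingCone k A)
    (hσ : sigmaMat k A = 1) {g κ t : ℝ} (hg : 0 < g) (hgk : n.choose k * g ^ k = 1) (hκ : g < κ)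
    (ht : t ∈ Ioo (0 : ℝ) 1) :
    InGardingCone k ((1 - t) • A + (t * κ) • 1) ∧ 1 < sigmaMat k ((1 - t) • A + (t * κ) • 1) := by
  obtain ⟨ht0, ht1⟩ := ht
  have hs : 0 < 1 - t := by linarith
  set τ := t * κ / (1 - t) with hτ
  have hmul : (1 - t) * τ = t * κ := by rw [hτ]; field_simp
  have hτ0 : 0 ≤ τ := by have := hg.trans hκ; positivity
  have hshift : (1 - t) • A + (t * κ) • 1 = (1 - t) • (A + τ • 1) := by
    rw [smul_add, smul_smul, hmul]
  obtain ⟨hcone, heq⟩ := (hA.add_posSemidef (PosSemidef.one.smul hτ0)).1.smul hs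
  rw [hshift]
  refine ⟨hcone, ?_⟩
  have hgain : g < (1 - t) * (τ + g) := by nlinarith
  have hchoose : (0 : ℝ) < n.choose k := by exact_mod_cast Nat.choose_pos hA.le_dim
  calc (1 : ℝ) = n.choose k * g ^ k := hgk.symm
    _ < n.choose k * ((1 - t) * (τ + g)) ^ k := by gcongr
    _ = (1 - t) ^ k * (n.choose k * (τ + g) ^ k) := by rw [mul_pow]; ring
    _ ≤ (1 - t) ^ k * sigmaMat k (A + τ • 1) := by
      gcongr
      exact hA.choose_mul_add_pow_le_sigmaMat hτ0 hg.le (by rw [hσ, hgk])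
    _ = sigmaMat k ((1 - t) • (A + τ • 1)) := heq.symm

end GardingCone

/-! ### Second derivatives and the comparison principle -/

section SecondDerivative

variable {E F : Type*} [NormedAddCommGroup E] [NormedSpace ℝ E] [NormedAddCommGroup F]
  [NormedSpace ℝ F] {f g : E → ℝ} {x : E} {B C : E →L[ℝ] E →L[ℝ] ℝ}

lemma apply_le_apply_of_le_on {S : Set E} {f' g' : E →L[ℝ] ℝ} {y : E}
    (hf : HasFDerivWithinAt f f' S x) (hg : HasFDerivWithinAt g g' S x) (hfg : ∀ z ∈ S, f z ≤ g z)
    (hx : f x = g x) (hy : y ∈ posTangentConeAt S x) : f' y ≤ g' y := by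
  have hmin : IsLocalMinOn (fun z => g z - f z) S x :=
    IsMinOn.localize fun z hz => by simpa [hx] using hfg z hz
  exact sub_nonneg.1 (hmin.hasFDerivWithinAt_nonneg (hg.sub hf) hy)

/-- `B` is the second Fréchet derivative of `f` at `x`, seen as a bilinear form. The first
derivative is only required to exist near `x`. -/
def HasSecondFDerivAt (f : E → ℝ) (B : E →L[ℝ] E →L[ℝ] ℝ) (x : E) : Prop :=
  ∃ f' : E → E →L[ℝ] ℝ, (∀ᶠ y in 𝓝 x, HasFDerivAt f (f' y) y) ∧ HasFDerivAt f' B x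

namespace HasSecondFDerivAt

lemma symmetric (hf : HasSecondFDerivAt f B x) (v w : E) : B v w = B w v := by
  obtain ⟨f', h₁, h₂⟩ := hf
  exact second_derivative_symmetric_of_eventually h₁ h₂ v w

lemma add (hf : HasSecondFDerivAt f B x) (hg : HasSecondFDerivAt g C x) :
    HasSecondFDerivAt (fun y => f y + g y) (B + C) x := by
  obtain ⟨f', hf₁, hf₂⟩ := hf
  obtain ⟨g', hg₁, hg₂⟩ := hg
  exact ⟨fun y => f' y + g' y, by filter_upwards [hf₁, hg₁] with y h h' using h.add h', hf₂.add hg₂⟩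

lemma const_mul (hf : HasSecondFDerivAt f B x) (c : ℝ) :
    HasSecondFDerivAt (fun y => c * f y) (c • B) x := by
  obtain ⟨f', h₁, h₂⟩ := hf
  exact ⟨fun y => c • f' y, by filter_upwards [h₁] with y h using h.const_mul c, h₂.const_smul c⟩

lemma sub (hf : HasSecondFDerivAt f B x) (hg : HasSecondFDerivAt g C x) :
    HasSecondFDerivAt (fun y => f y - g y) (B - C) x := by
  obtain ⟨f', hf₁, hf₂⟩ := hf
  obtain ⟨g', hg₁, hg₂⟩ := hg
  exact ⟨fun y => f' y - g' y, by filter_upwards [hf₁, hg₁] with y h h' using h.sub h', hf₂.sub hg₂⟩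

lemma add_const (hf : HasSecondFDerivAt f B x) (c : ℝ) :
    HasSecondFDerivAt (fun y => f y + c) B x := by
  obtain ⟨f', h₁, h₂⟩ := hf
  exact ⟨f', by filter_upwards [h₁] with y h using h.add_const c, h₂⟩

lemma comp_clm {x : F} (T : F →L[ℝ] E) (hf : HasSecondFDerivAt f B (T x)) :
    HasSecondFDerivAt (fun y => f (T y)) (B.bilinearComp T T) x := by
  obtain ⟨f', h₁, h₂⟩ := hf
  refine ⟨fun y => (f' (T y)).comp T, ?_, ?_⟩
  · filter_upwards [T.continuous.continuousAt.eventually h₁] with y h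
    exact h.comp y T.hasFDerivAt
  · refine ((h₂.comp x T.hasFDerivAt).clm_comp (hasFDerivAt_const T x)).congr_fderiv ?_
    ext v w
    simp

lemma apply_self_nonneg_of_isLocalMin (hf : HasSecondFDerivAt f B x) (hmin : IsLocalMin f x)
    (v : E) : 0 ≤ B v v := by
  by_contra! hneg
  obtain ⟨f', h₁, h₂⟩ := hf
  set l : ℝ → E := fun t => x + t • v
  have hl (t : ℝ) : HasDerivAt l v t := by
    have := ((hasDerivAt_id t).smul_const v).const_add x
    rwa [one_smul] at this
  have hl0 : l 0 = x := by simp [l]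
  have hl_tendsto : Tendsto l (𝓝 0) (𝓝 x) := by
    simpa only [hl0] using (hl 0).continuousAt.tendsto
  have hd : ∀ᶠ t in 𝓝 (0 : ℝ), HasDerivAt (f ∘ l) (f' (l t) v) t := by
    filter_upwards [hl_tendsto.eventually h₁] with t ht using ht.comp_hasDerivAt t (hl t)
  have hderiv : deriv (f ∘ l) =ᶠ[𝓝 0] fun t => f' (l t) v := by
    filter_upwards [hd] with t ht using ht.deriv
  have hdd : deriv (deriv (f ∘ l)) 0 = B v v := by
    rw [← hl0] at h₂
    rw [hderiv.deriv_eq]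
    simpa using ((h₂.comp_hasDerivAt (0 : ℝ) (hl 0)).clm_apply (hasDerivAt_const 0 v)).deriv
  have hmin_line : IsLocalMin (f ∘ l) 0 := by
    filter_upwards [hl_tendsto.eventually hmin] with t ht
    simpa [hl0] using ht
  have hmax_line : IsLocalMax (f ∘ l) 0 :=
    isLocalMax_of_deriv_deriv_neg (by rwa [hdd]) hmin_line.deriv_eq_zero
      hd.self_of_nhds.continuousAt
  have hconst : f ∘ l =ᶠ[𝓝 0] fun _ => (f ∘ l) 0 := by
    filter_upwards [hmin_line, hmax_line] with t h h' using le_antisymm h' h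
  have hdd_zero : deriv (deriv (f ∘ l)) 0 = 0 := by
    rw [hconst.deriv.deriv_eq]
    simp
  linarith

end HasSecondFDerivAt

lemma exists_hasSecondFDerivAt_of_contDiffOn {s : Set E} (hf : ContDiffOn ℝ 2 f s) (hs : s ∈ 𝓝 x) :
    ∃ B, HasSecondFDerivAt f B x ∧
      ∀ v w, iteratedFDerivWithin ℝ 2 f s x ![v, w] = B v w := by
  have hfx : ContDiffAt ℝ 2 f x := hf.contDiffAt hs
  refine ⟨fderiv ℝ (fderiv ℝ f) x, ⟨fderiv ℝ f, ?_, ?_⟩, fun v w => ?_⟩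
  · filter_upwards [hfx.eventually (by simp)] with y hy
    exact (hy.differentiableAt two_ne_zero).hasFDerivAt
  · exact ((hfx.fderiv_right (m := 1) le_rfl).differentiableAt one_ne_zero).hasFDerivAt
  · rw [iteratedFDerivWithin_congr_set (t := univ) (by simpa [eventuallyEq_univ] using hs),
      iteratedFDerivWithin_univ, iteratedFDeriv_two_apply]
    rfl

end SecondDerivative

section InnerForm

variable {E : Type*} [NormedAddCommGroup E] [InnerProductSpace ℝ E]

lemma hasFDerivAt_quadratic (κ c : ℝ) (x : E) :
    HasFDerivAt (fun y => κ / 2 * (‖y‖ ^ 2 - c)) ((κ • innerSL ℝ : E →L[ℝ] E →L[ℝ] ℝ) x) x := by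
  refine (((hasStrictFDerivAt_norm_sq x).hasFDerivAt.sub_const c).const_mul (κ / 2)).congr_fderiv ?_
  ext z
  simp only [_root_.smul_apply, coe_innerSL_apply, nsmul_eq_mul, Nat.cast_ofNat, smul_eq_mul]
  ring

lemma hasSecondFDerivAt_quadratic (κ c : ℝ) (x : E) :
    HasSecondFDerivAt (fun y => κ / 2 * (‖y‖ ^ 2 - c))
      (κ • innerSL ℝ : E →L[ℝ] E →L[ℝ] ℝ) x :=
  ⟨_, Eventually.of_forall (hasFDerivAt_quadratic κ c), ContinuousLinearMap.hasFDerivAt _⟩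

end InnerForm

section FormMatrix

variable {n k : ℕ} {B C : Euc n →L[ℝ] Euc n →L[ℝ] ℝ}

/-- The matrix of a bilinear form in the standard basis; `hessianWithin` is the matrix of the second
derivative. -/
def formMatrix (B : Euc n →L[ℝ] Euc n →L[ℝ] ℝ) : Matrix (Fin n) (Fin n) ℝ :=
  fun i j => B (EuclideanSpace.single i 1) (EuclideanSpace.single j 1)

lemma formMatrix_isHermitian (hB : ∀ v w, B v w = B w v) : (formMatrix B).IsHermitian := by
  ext i j
  exact hB _ _

lemma inner_single_single (i j : Fin n) :
    ⟪(EuclideanSpace.single i (1 : ℝ) : Euc n), EuclideanSpace.single j (1 : ℝ)⟫ =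
      (1 : Matrix (Fin n) (Fin n) ℝ) i j := by
  rw [EuclideanSpace.inner_single_left]
  simp [Matrix.one_apply]

lemma formMatrix_innerSL : formMatrix (innerSL ℝ : Euc n →L[ℝ] Euc n →L[ℝ] ℝ) = 1 := by
  ext i j
  exact inner_single_single i j

lemma apply_eq_sum_formMatrix (B : Euc n →L[ℝ] Euc n →L[ℝ] ℝ) (v w : Euc n) :
    B v w = ∑ i, ∑ j, v i * formMatrix B i j * w j := by
  have hsum (x : Euc n) : x = ∑ i, x i • EuclideanSpace.single i (1 : ℝ) := by
    ext j
    simp [Finset.sum_apply, Pi.single_apply]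
  conv_lhs => rw [hsum v, hsum w]
  simp only [map_sum, map_smul, _root_.sum_apply, _root_.smul_apply, smul_eq_mul, Finset.mul_sum]
  rw [Finset.sum_comm]
  exact Finset.sum_congr rfl fun i _ => Finset.sum_congr rfl fun j _ => by rw [formMatrix]; ring

lemma apply_comm_of_isHermitian (hB : (formMatrix B).IsHermitian) (v w : Euc n) :
    B v w = B w v := by
  rw [apply_eq_sum_formMatrix B v w, apply_eq_sum_formMatrix B w v, Finset.sum_comm]
  refine Finset.sum_congr rfl fun i _ => Finset.sum_congr rfl fun j _ => ?_
  rw [show formMatrix B j i = formMatrix B i j from hB.apply i j]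
  ring

lemma formMatrix_posSemidef (hH : (formMatrix B).IsHermitian) (hB : ∀ v, 0 ≤ B v v) :
    (formMatrix B).PosSemidef := by
  refine PosSemidef.of_dotProduct_mulVec_nonneg hH fun x => ?_
  refine (hB (WithLp.toLp 2 x)).trans_eq ?_
  rw [apply_eq_sum_formMatrix]
  simp only [dotProduct, mulVec, star_trivial, Finset.mul_sum, mul_assoc]

lemma sigmaMat_formMatrix_le (hB : InGardingCone k (formMatrix B))
    (hC : (formMatrix C).IsHermitian) (hBC : ∀ v, B v v ≤ C v v) :
    sigmaMat k (formMatrix B) ≤ sigmaMat k (formMatrix C) :=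
  hB.sigmaMat_le <| formMatrix_posSemidef (B := C - B) (hC.sub hB.isHermitian) fun v =>
    sub_nonneg.2 (hBC v)

lemma sigmaMat_formMatrix_bilinearComp (hB : (formMatrix B).IsHermitian) (hk : k ≤ n)
    (R : Euc n →ₗᵢ[ℝ] Euc n) :
    sigmaMat k (formMatrix (B.bilinearComp R.toContinuousLinearMap R.toContinuousLinearMap)) =
      sigmaMat k (formMatrix B) := by
  set P : Matrix (Fin n) (Fin n) ℝ := Matrix.of fun i j => R (EuclideanSpace.single j 1) i with hP
  have horth : Pᵀ * P = 1 := by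
    ext i j
    rw [← inner_single_single, ← R.inner_map_map, PiLp.inner_apply]
    simp [hP, Matrix.mul_apply, mul_comm]
  rw [← sigmaMat_conj hB hk horth]
  congr 1
  ext i j
  change B (R _) (R _) = _
  rw [apply_eq_sum_formMatrix, Finset.sum_comm]
  simp only [hP, Matrix.mul_apply, transpose_apply, Finset.sum_mul, Matrix.of_apply]

lemma exists_hasSecondFDerivAt_formMatrix_eq {f : Euc n → ℝ} {s : Set (Euc n)} {x : Euc n}
    (hf : ContDiffOn ℝ 2 f s) (hs : s ∈ 𝓝 x) :
    ∃ B, HasSecondFDerivAt f B x ∧ formMatrix B = hessianWithin f s x := by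
  obtain ⟨B, hB, hHess⟩ := exists_hasSecondFDerivAt_of_contDiffOn hf hs
  exact ⟨B, hB, by ext i j; exact (hHess _ _).symm⟩

end FormMatrix

lemma HasSecondFDerivAt.isHermitian {n : ℕ} {f : Euc n → ℝ} {B : Euc n →L[ℝ] Euc n →L[ℝ] ℝ}
    {x : Euc n} (hf : HasSecondFDerivAt f B x) : (formMatrix B).IsHermitian :=
  formMatrix_isHermitian hf.symmetric

theorem le_of_sigmaMat_lt {n k : ℕ} {K : Set (Euc n)} (hK : IsCompact K) {v w : Euc n → ℝ}
    (hv : ContinuousOn v K) (hw : ContinuousOn w K)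
    (hvw : ∀ x ∈ K, v x ≤ w x ∨ (K ∈ 𝓝 x ∧ ∃ B C, HasSecondFDerivAt v B x ∧
      HasSecondFDerivAt w C x ∧ InGardingCone k (formMatrix B) ∧
      sigmaMat k (formMatrix C) < sigmaMat k (formMatrix B))) :
    ∀ x ∈ K, v x ≤ w x := by
  intro x hx
  obtain ⟨y, hy, hmin⟩ := hK.exists_isMinOn ⟨x, hx⟩ (hw.sub hv)
  suffices v y ≤ w y from sub_nonneg.1 ((sub_nonneg.2 this).trans (hmin hx))
  rcases hvw y hy with h | ⟨hKy, B, C, hB, hC, hcone, hlt⟩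
  · exact h
  · have hBC (z : Euc n) : B z z ≤ C z z :=
      sub_nonneg.1 ((hC.sub hB).apply_self_nonneg_of_isLocalMin (hmin.isLocalMin hKy) z)
    exact absurd hlt (sigmaMat_formMatrix_le hcone hC.isHermitian hBC).not_gt

/-! ### Convex rings around a ball -/

section Ring

variable {n : ℕ} {Ω₁ : Set (Euc n)} {ε : ℝ} {x : Euc n}

lemma eventually_add_smul_self_mem (hΩo : IsOpen Ω₁) (hε : 0 < ε) (hx : x ∈ Ω₁)
    (hxε : ‖x‖ = ε) : ∀ᶠ t in 𝓝[>] (0 : ℝ), x + t • x ∈ Ω₁ \ closedBall 0 ε := by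
  have hcont : Continuous fun t : ℝ => x + t • x := by fun_prop
  have hmem : ∀ᶠ t in 𝓝 (0 : ℝ), x + t • x ∈ Ω₁ :=
    hcont.continuousAt.eventually (hΩo.mem_nhds (by simpa using hx))
  filter_upwards [hmem.filter_mono nhdsWithin_le_nhds, self_mem_nhdsWithin] with t ht ht0
  have ht1 : 1 < 1 + t := by simpa using ht0
  refine ⟨ht, ?_⟩
  have hadd : x + t • x = (1 + t) • x := by module
  rw [mem_closedBall_zero_iff, hadd, norm_smul, hxε, Real.norm_of_nonneg (by linarith), not_le]
  exact lt_mul_of_one_lt_left hε ht1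

lemma mem_closure_of_eventually_add_smul_self_mem {S : Set (Euc n)}
    (h : ∀ᶠ t in 𝓝[>] (0 : ℝ), x + t • x ∈ S) : x ∈ closure S := by
  have hcont : Continuous fun t : ℝ => x + t • x := by fun_prop
  have htendsto := hcont.tendsto 0
  rw [zero_smul, add_zero] at htendsto
  exact mem_closure_of_tendsto (htendsto.mono_left nhdsWithin_le_nhds) h

lemma mem_ringSet_of_norm_eq (hΩo : IsOpen Ω₁) (hε : 0 < ε)
    (hball : closedBall (0 : Euc n) ε ⊆ Ω₁) (hx : ‖x‖ = ε) : x ∈ ringSet Ω₁ 0 ε :=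
  mem_closure_of_eventually_add_smul_self_mem
    (eventually_add_smul_self_mem hΩo hε (hball (by simp [hx])) hx)

lemma ringSet_eq (hΩo : IsOpen Ω₁) (hε : 0 < ε) (hball : closedBall (0 : Euc n) ε ⊆ Ω₁) :
    ringSet Ω₁ 0 ε = closure Ω₁ ∩ {x | ε ≤ ‖x‖} := by
  refine Subset.antisymm (closure_minimal ?_ ?_) ?_
  · rintro x ⟨hx, hxε⟩
    exact ⟨subset_closure hx, le_of_not_ge fun h => hxε (by simpa using h)⟩
  · exact isClosed_closure.inter (isClosed_le continuous_const continuous_norm)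
  · rintro x ⟨hx, hxε⟩
    rcases (show ε ≤ ‖x‖ from hxε).eq_or_lt with h | h
    · exact mem_ringSet_of_norm_eq hΩo hε hball h.symm
    · have := isClosed_closedBall.isOpen_compl.inter_closure (t := Ω₁)
        (show x ∈ (closedBall 0 ε)ᶜ ∩ closure Ω₁ from ⟨by simpa using h, hx⟩)
      rwa [inter_comm] at this

lemma ringSet_subset_closure : ringSet Ω₁ 0 ε ⊆ closure Ω₁ := closure_mono sdiff_subset

lemma ringSet_mem_nhds (hΩo : IsOpen Ω₁) (hx : x ∈ Ω₁ \ closedBall 0 ε) : ringSet Ω₁ 0 ε ∈ 𝓝 x :=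
  mem_of_superset ((hΩo.sdiff isClosed_closedBall).mem_nhds hx) subset_closure

lemma isCompact_ringSet (hΩb : IsBounded Ω₁) : IsCompact (ringSet Ω₁ 0 ε) :=
  (hΩb.subset sdiff_subset).isCompact_closure

lemma norm_eq_or_mem_of_mem_ringSet (hΩo : IsOpen Ω₁) (hε : 0 < ε)
    (hball : closedBall (0 : Euc n) ε ⊆ Ω₁) (hx : x ∈ ringSet Ω₁ 0 ε) :
    ‖x‖ = ε ∨ x ∈ frontier Ω₁ ∨ x ∈ Ω₁ \ closedBall 0 ε := by
  rw [ringSet_eq hΩo hε hball] at hx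
  rcases (show ε ≤ ‖x‖ from hx.2).eq_or_lt with h | h
  · exact Or.inl h.symm
  · by_cases hxΩ : x ∈ Ω₁
    · exact Or.inr (Or.inr ⟨hxΩ, by simpa using h⟩)
    · exact Or.inr (Or.inl (hΩo.frontier_eq ▸ ⟨hx.1, hxΩ⟩))

lemma uniqueDiffWithinAt_ringSet_of_norm_eq (hΩo : IsOpen Ω₁) (hΩconv : Convex ℝ Ω₁) (hε : 0 < ε)
    (hball : closedBall (0 : Euc n) ε ⊆ Ω₁) (hx : ‖x‖ = ε) :
    UniqueDiffWithinAt ℝ (ringSet Ω₁ 0 ε) x := by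
  set S : Set (Euc n) := {y | ε ^ 2 < ⟪x, y⟫} ∩ Ω₁
  have hSo : IsOpen S := (isOpen_lt continuous_const (by fun_prop)).inter hΩo
  have hSconv : Convex ℝ S :=
    (convex_halfSpace_gt (innerₗ (Euc n) x).isLinear _).inter hΩconv
  have hxS : x ∈ closure S := by
    refine mem_closure_of_eventually_add_smul_self_mem ?_
    filter_upwards [eventually_add_smul_self_mem hΩo hε (hball (by simp [hx])) hx,
      self_mem_nhdsWithin] with t ht ht0
    refine ⟨?_, ht.1⟩
    rw [Set.mem_ofPred_eq, inner_add_right, inner_smul_right, real_inner_self_eq_norm_sq, hx]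
    exact lt_add_of_pos_right _ (mul_pos ht0 (by positivity))
  have hSsub : S ⊆ ringSet Ω₁ 0 ε := by
    rintro y ⟨hy, hyΩ⟩
    refine subset_closure ⟨hyΩ, fun hyε => ?_⟩
    have hle := real_inner_le_norm x y
    rw [mem_closedBall_zero_iff] at hyε
    rw [hx] at hle
    rw [Set.mem_ofPred_eq] at hy
    nlinarith
  have hSne : (interior S).Nonempty := by
    rw [hSo.interior_eq]
    exact closure_nonempty_iff.1 ⟨x, hxS⟩
  exact (uniqueDiffWithinAt_convex hSconv hSne hxS).mono hSsub

lemma uniqueDiffOn_ringSet (hΩo : IsOpen Ω₁) (hΩconv : Convex ℝ Ω₁) (hε : 0 < ε)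
    (hball : closedBall (0 : Euc n) ε ⊆ Ω₁) : UniqueDiffOn ℝ (ringSet Ω₁ 0 ε) := by
  intro x hx
  rw [ringSet_eq hΩo hε hball] at hx
  rcases (show ε ≤ ‖x‖ from hx.2).eq_or_lt with h | h
  · exact uniqueDiffWithinAt_ringSet_of_norm_eq hΩo hΩconv hε hball h.symm
  · have h0 : (0 : Euc n) ∈ interior (closure Ω₁) :=
      interior_mono subset_closure (by rw [hΩo.interior_eq]; exact hball (by simpa using hε.le))
    have hu : UniqueDiffWithinAt ℝ (closure Ω₁) x :=
      uniqueDiffWithinAt_convex hΩconv.closure ⟨0, h0⟩ (by simpa using hx.1)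
    have hN : {y : Euc n | ε < ‖y‖} ∈ 𝓝 x :=
      (isOpen_lt continuous_const continuous_norm).mem_nhds h
    refine (hu.inter hN).mono ?_
    rintro y ⟨hyΩ, hy⟩
    rw [ringSet_eq hΩo hε hball]
    exact ⟨hyΩ, (show ε < ‖y‖ from hy).le⟩

lemma exists_lt_norm_of_mem_frontier (hΩo : IsOpen Ω₁) (hε : 0 ≤ ε)
    (hball : closedBall (0 : Euc n) ε ⊆ Ω₁) : ∃ r, ε < r ∧ ∀ x ∈ frontier Ω₁, r ≤ ‖x‖ := by
  obtain ⟨δ, hδ, hsub⟩ :=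
    (isCompact_closedBall (0 : Euc n) ε).exists_cthickening_subset_open hΩo hball
  rw [cthickening_closedBall hδ.le hε] at hsub
  refine ⟨ε + δ, by linarith, fun x hx => le_of_not_ge fun hle => ?_⟩
  rw [hΩo.frontier_eq] at hx
  exact hx.2 (hsub (by simpa [add_comm] using hle))

lemma self_mem_posTangentConeAt_ringSet (hΩo : IsOpen Ω₁) (hε : 0 < ε) (hx : x ∈ Ω₁)
    (hxε : ‖x‖ = ε) : x ∈ posTangentConeAt (ringSet Ω₁ 0 ε) x :=
  mem_posTangentConeAt_of_frequently_mem <|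
    ((eventually_add_smul_self_mem hΩo hε hx hxε).mono fun _ ht => subset_closure ht).frequently

end Ring

/-! ### Rotations, and functions constant on a sphere -/

section Rotation

variable {E : Type*} [NormedAddCommGroup E] [InnerProductSpace ℝ E] {e f : E}

/-- The rotation by the angle `θ` in the plane spanned by the orthonormal vectors `e` and `f`,
extended by the identity on its orthogonal complement. -/
def planeRotation (e f : E) (θ : ℝ) : E →ₗ[ℝ] E :=
  LinearMap.id +
    (((Real.cos θ - 1) • innerₗ E e - Real.sin θ • innerₗ E f).smulRight e +
      (Real.sin θ • innerₗ E e + (Real.cos θ - 1) • innerₗ E f).smulRight f)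

lemma planeRotation_apply (e f : E) (θ : ℝ) (x : E) : planeRotation e f θ x =
    x + (((Real.cos θ - 1) * ⟪e, x⟫ - Real.sin θ * ⟪f, x⟫) • e +
      (Real.sin θ * ⟪e, x⟫ + (Real.cos θ - 1) * ⟪f, x⟫) • f) := by
  simp [planeRotation]

lemma norm_smul_add_smul_sq (he : ‖e‖ = 1) (hf : ‖f‖ = 1) (hef : ⟪e, f⟫ = 0) (α β : ℝ) :
    ‖α • e + β • f‖ ^ 2 = α ^ 2 + β ^ 2 := by
  rw [norm_add_sq_real, norm_smul, norm_smul, he, hf, real_inner_smul_left, real_inner_smul_right,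
    hef]
  simp

lemma inner_sq_add_inner_sq_le (he : ‖e‖ = 1) (hf : ‖f‖ = 1) (hef : ⟪e, f⟫ = 0) (x : E) :
    ⟪e, x⟫ ^ 2 + ⟪f, x⟫ ^ 2 ≤ ‖x‖ ^ 2 := by
  have hnonneg := sq_nonneg ‖x - (⟪e, x⟫ • e + ⟪f, x⟫ • f)‖
  rw [norm_sub_sq_real, norm_smul_add_smul_sq he hf hef, inner_add_right, real_inner_smul_right,
    real_inner_smul_right, real_inner_comm e x, real_inner_comm f x] at hnonneg
  linarith

lemma planeRotation_apply_left (he : ‖e‖ = 1) (hef : ⟪e, f⟫ = 0) (θ : ℝ) :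
    planeRotation e f θ e = Real.cos θ • e + Real.sin θ • f := by
  rw [planeRotation_apply, real_inner_self_eq_norm_sq, he, real_inner_comm, hef]
  module

lemma norm_planeRotation (he : ‖e‖ = 1) (hf : ‖f‖ = 1) (hef : ⟪e, f⟫ = 0) (θ : ℝ) (x : E) :
    ‖planeRotation e f θ x‖ = ‖x‖ := by
  refine (sq_eq_sq₀ (norm_nonneg _) (norm_nonneg _)).1 ?_
  rw [planeRotation_apply, norm_add_sq_real, norm_smul_add_smul_sq he hf hef, inner_add_right,
    real_inner_smul_right, real_inner_smul_right, real_inner_comm e x, real_inner_comm f x]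
  linear_combination (⟪e, x⟫ ^ 2 + ⟪f, x⟫ ^ 2) * Real.cos_sq_add_sin_sq θ

lemma norm_planeRotation_sub_le (he : ‖e‖ = 1) (hf : ‖f‖ = 1) (hef : ⟪e, f⟫ = 0) (θ : ℝ) (x : E) :
    ‖planeRotation e f θ x - x‖ ≤ |θ| * ‖x‖ := by
  refine le_of_sq_le_sq ?_ (by positivity)
  calc ‖planeRotation e f θ x - x‖ ^ 2
      = (2 - 2 * Real.cos θ) * (⟪e, x⟫ ^ 2 + ⟪f, x⟫ ^ 2) := by
        rw [planeRotation_apply, add_sub_cancel_left, norm_smul_add_smul_sq he hf hef]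
        linear_combination (⟪e, x⟫ ^ 2 + ⟪f, x⟫ ^ 2) * Real.cos_sq_add_sin_sq θ
    _ ≤ θ ^ 2 * ‖x‖ ^ 2 := by
        have hcos : 2 - 2 * Real.cos θ ≤ θ ^ 2 := by
          linarith [Real.one_sub_sq_div_two_le_cos (x := θ)]
        gcongr
        exact inner_sq_add_inner_sq_le he hf hef x
    _ = (|θ| * ‖x‖) ^ 2 := by rw [mul_pow, sq_abs]

end Rotation

section Sphere

variable {E : Type*} [NormedAddCommGroup E] [InnerProductSpace ℝ E] {u : E → ℝ}
  {F : E → E →L[ℝ] ℝ} {H : E →L[ℝ] E →L[ℝ] ℝ} {p τ : E} {ε c : ℝ}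

/-- The circle through `p` and `τ`, starting from `p` in the direction `τ`. -/
def circleArc (p τ : E) (θ : ℝ) : E := Real.cos θ • p + Real.sin θ • τ

lemma circleArc_zero (p τ : E) : circleArc p τ 0 = p := by simp [circleArc]

lemma hasDerivAt_circleArc (p τ : E) (θ : ℝ) :
    HasDerivAt (circleArc p τ) (Real.cos θ • τ - Real.sin θ • p) θ :=
  (((Real.hasDerivAt_cos θ).smul_const p).add
    ((Real.hasDerivAt_sin θ).smul_const τ)).congr_deriv (by module)

lemma circleArc_mem_sphere (hp : ‖p‖ = ε) (hτ : ‖τ‖ = ε) (hpτ : ⟪p, τ⟫ = 0) (θ : ℝ) :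
    circleArc p τ θ ∈ sphere 0 ε := by
  rw [mem_sphere_zero_iff_norm, ← sq_eq_sq₀ (norm_nonneg _) (hp ▸ norm_nonneg p), circleArc,
    norm_add_sq_real, norm_smul, norm_smul, hp, hτ, real_inner_smul_left, real_inner_smul_right,
    hpτ, mul_pow, mul_pow, Real.norm_eq_abs, Real.norm_eq_abs, sq_abs, sq_abs]
  linear_combination ε ^ 2 * Real.cos_sq_add_sin_sq θ

lemma fderiv_circleArc_eq_zero (hF : ∀ x ∈ sphere 0 ε, HasFDerivWithinAt u (F x) (sphere 0 ε) x)
    (hu : ∀ x ∈ sphere 0 ε, u x = c) (hp : ‖p‖ = ε) (hτ : ‖τ‖ = ε) (hpτ : ⟪p, τ⟫ = 0) (θ : ℝ) :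
    F (circleArc p τ θ) (Real.cos θ • τ - Real.sin θ • p) = 0 := by
  have hmem := circleArc_mem_sphere hp hτ hpτ
  have hderiv := (hF _ (hmem θ)).comp_hasDerivWithinAt θ
    (hasDerivAt_circleArc p τ θ).hasDerivWithinAt (s := univ) (fun r _ => hmem r)
  have hconst : u ∘ circleArc p τ = fun _ => c := funext fun r => hu _ (hmem r)
  rw [hasDerivWithinAt_univ, hconst] at hderiv
  exact hderiv.unique (hasDerivAt_const θ c)

lemma hasDerivAt_comp_circleArc (hH : HasFDerivWithinAt F H (sphere 0 ε) p) (hp : ‖p‖ = ε)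
    (hτ : ‖τ‖ = ε) (hpτ : ⟪p, τ⟫ = 0) : HasDerivAt (fun θ => F (circleArc p τ θ)) (H τ) 0 := by
  rw [← circleArc_zero p τ] at hH
  have hderiv := hH.comp_hasDerivWithinAt (0 : ℝ) (hasDerivAt_circleArc p τ 0).hasDerivWithinAt
    (s := univ) (fun r _ => circleArc_mem_sphere hp hτ hpτ r)
  rw [hasDerivWithinAt_univ] at hderiv
  exact hderiv.congr_deriv (by simp)

theorem hessian_tangential_eq (hF : ∀ x ∈ sphere 0 ε, HasFDerivWithinAt u (F x) (sphere 0 ε) x)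
    (hH : HasFDerivWithinAt F H (sphere 0 ε) p) (hu : ∀ x ∈ sphere 0 ε, u x = c) (hp : ‖p‖ = ε)
    (hτ : ‖τ‖ = ε) (hpτ : ⟪p, τ⟫ = 0) : H τ τ = F p p := by
  have hvel : HasDerivAt (fun θ : ℝ => Real.cos θ • τ - Real.sin θ • p) (-p) 0 :=
    (((Real.hasDerivAt_cos 0).smul_const τ).sub
      ((Real.hasDerivAt_sin 0).smul_const p)).congr_deriv (by simp)
  have hderiv := (hasDerivAt_comp_circleArc hH hp hτ hpτ).clm_apply hvel
  rw [funext (fderiv_circleArc_eq_zero hF hu hp hτ hpτ), circleArc_zero] at hderiv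
  have := hderiv.unique (hasDerivAt_const (0 : ℝ) (0 : ℝ))
  simp only [Real.cos_zero, one_smul, Real.sin_zero, zero_smul, sub_zero, map_neg] at this
  linarith

lemma nonneg_of_hasDerivAt_of_eventually_le {h : ℝ → ℝ} {d x : ℝ} (hd : HasDerivAt h d x)
    (hle : ∀ᶠ r in 𝓝[>] x, h x ≤ h r) : 0 ≤ d := by
  have hslope : Tendsto (slope h x) (𝓝[>] x) (𝓝 d) :=
    (hasDerivAt_iff_tendsto_slope.1 hd).mono_left (nhdsWithin_mono x fun _ hr => ne_of_gt hr)
  refine ge_of_tendsto hslope ?_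
  filter_upwards [hle, self_mem_nhdsWithin] with r hr hxr
  rw [slope_def_field]
  exact div_nonneg (sub_nonneg.2 hr) (sub_nonneg.2 (le_of_lt hxr))

theorem neg_mul_le_hessian_tangential_normal
    (hF : ∀ x ∈ sphere 0 ε, HasFDerivWithinAt u (F x) (sphere 0 ε) x)
    (hH : HasFDerivWithinAt F H (sphere 0 ε) p) (hu : ∀ x ∈ sphere 0 ε, u x = c) (hp : ‖p‖ = ε)
    (hτ : ‖τ‖ = ε) (hpτ : ⟪p, τ⟫ = 0) {C : ℝ}
    (hC : ∀ᶠ θ in 𝓝[>] (0 : ℝ), (1 - C * θ) * F p p ≤ F (circleArc p τ θ) (circleArc p τ θ)) :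
    -(C * F p p) ≤ H τ p := by
  have hFτ : F p τ = 0 := by
    simpa [circleArc_zero] using fderiv_circleArc_eq_zero hF hu hp hτ hpτ 0
  have hderiv := ((hasDerivAt_comp_circleArc hH hp hτ hpτ).clm_apply
    (hasDerivAt_circleArc p τ 0)).add ((hasDerivAt_id (0 : ℝ)).const_mul (C * F p p))
  have hnonneg := nonneg_of_hasDerivAt_of_eventually_le hderiv <| by
    filter_upwards [hC] with θ hθ
    simp only [id_eq, Pi.add_apply, circleArc_zero, mul_zero, add_zero]
    linarith
  simp only [circleArc_zero, Real.cos_zero, one_smul, Real.sin_zero, zero_smul, sub_zero, hFτ,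
    add_zero, mul_one] at hnonneg
  linarith

lemma norm_div_norm_smul {w : E} (hε : 0 ≤ ε) (hw : w ≠ 0) : ‖(ε / ‖w‖) • w‖ = ε := by
  rw [norm_smul, norm_div, norm_norm, Real.norm_of_nonneg hε,
    div_mul_cancel₀ _ (norm_ne_zero_iff.2 hw)]

lemma sq_mul_hessian_tangential_eq
    (hF : ∀ x ∈ sphere 0 ε, HasFDerivWithinAt u (F x) (sphere 0 ε) x)
    (hH : HasFDerivWithinAt F H (sphere 0 ε) p) (hu : ∀ x ∈ sphere 0 ε, u x = c) (hp : ‖p‖ = ε)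
    {w : E} (hw : ⟪p, w⟫ = 0) : ε ^ 2 * H w w = F p p * ‖w‖ ^ 2 := by
  rcases eq_or_ne w 0 with rfl | hw0
  · simp
  have htan := hessian_tangential_eq hF hH hu hp (norm_div_norm_smul (hp ▸ norm_nonneg p) hw0)
    (by rw [real_inner_smul_right, hw, mul_zero])
  simp only [map_smul, _root_.smul_apply, smul_eq_mul] at htan
  rw [← htan]
  field_simp [norm_ne_zero_iff.2 hw0]

lemma mul_abs_hessian_tangential_normal_le
    (hF : ∀ x ∈ sphere 0 ε, HasFDerivWithinAt u (F x) (sphere 0 ε) x)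
    (hH : HasFDerivWithinAt F H (sphere 0 ε) p) (hu : ∀ x ∈ sphere 0 ε, u x = c) (hp : ‖p‖ = ε)
    {C : ℝ} (hC : ∀ τ, ‖τ‖ = ε → ⟪p, τ⟫ = 0 →
      ∀ᶠ θ in 𝓝[>] (0 : ℝ), (1 - C * θ) * F p p ≤ F (circleArc p τ θ) (circleArc p τ θ))
    {w : E} (hw : ⟪p, w⟫ = 0) : ε * |H w p| ≤ C * F p p * ‖w‖ := by
  rcases eq_or_ne w 0 with rfl | hw0
  · simp
  set τ := (ε / ‖w‖) • w with hτ
  have hτε : ‖τ‖ = ε := norm_div_norm_smul (hp ▸ norm_nonneg p) hw0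
  have hpτ : ⟪p, τ⟫ = 0 := by rw [hτ, real_inner_smul_right, hw, mul_zero]
  have hbound {σ : E} (hσ : ‖σ‖ = ε) (hpσ : ⟪p, σ⟫ = 0) : -(C * F p p) ≤ H σ p :=
    neg_mul_le_hessian_tangential_normal hF hH hu hp hσ hpσ (hC σ hσ hpσ)
  have habs : |H τ p| ≤ C * F p p := by
    refine abs_le.2 ⟨hbound hτε hpτ, ?_⟩
    have := hbound (σ := -τ) (by rwa [norm_neg]) (by rw [inner_neg_right, hpτ, neg_zero])
    rw [map_neg, _root_.neg_apply] at this
    linarith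
  have hw_pos : 0 < ‖w‖ := norm_pos_iff.2 hw0
  rwa [hτ, map_smul, _root_.smul_apply, smul_eq_mul, abs_mul, abs_div, abs_norm,
    abs_of_nonneg (hp ▸ norm_nonneg p), div_mul_eq_mul_div, div_le_iff₀ hw_pos] at habs

end Sphere

/-! ### The Hessian at a boundary point -/

section NormalForm

variable {E : Type*} [NormedAddCommGroup E] [InnerProductSpace ℝ E] {B : E →L[ℝ] E →L[ℝ] ℝ}
  {ν : E} {a C : ℝ}

lemma apply_self_eq_of_tangential (hB : ∀ v w, B v w = B w v) (hν : ‖ν‖ = 1)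
    (htan : ∀ w, ⟪w, ν⟫ = 0 → B w w = a * ‖w‖ ^ 2) (v : E) :
    B v v = a * ‖v‖ ^ 2 + 2 * (⟪v, ν⟫ * B v ν) - (a + B ν ν) * ⟪v, ν⟫ ^ 2 := by
  have horth : ⟪v - ⟪v, ν⟫ • ν, ν⟫ = 0 := by
    rw [inner_sub_left, real_inner_smul_left, real_inner_self_eq_norm_sq, hν]
    ring
  have htan' := htan _ horth
  rw [norm_sub_sq_real, norm_smul, hν, real_inner_smul_right, Real.norm_eq_abs, mul_one,
    sq_abs] at htan'
  simp only [map_sub, map_smul, _root_.sub_apply, _root_.smul_apply, smul_eq_mul] at htan'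
  linear_combination htan' + ⟪v, ν⟫ * hB ν v

lemma le_apply_self_of_tangential (hB : ∀ v w, B v w = B w v) (hν : ‖ν‖ = 1) (ha : 0 ≤ a)
    (htan : ∀ w, ⟪w, ν⟫ = 0 → B w w = a * ‖w‖ ^ 2)
    (hmix : ∀ w, ⟪w, ν⟫ = 0 → |B w ν| ≤ C * a * ‖w‖) (v : E) :
    a / 2 * ‖v‖ ^ 2 + (B ν ν - (2 * C ^ 2 + 1) * a) * ⟪v, ν⟫ ^ 2 ≤ B v v := by
  set z := ⟪v, ν⟫ with hz
  set w := v - z • ν with hw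
  have horth : ⟪w, ν⟫ = 0 := by
    rw [hw, inner_sub_left, real_inner_smul_left, real_inner_self_eq_norm_sq, hν, ← hz]
    ring
  have hnorm : ‖v‖ ^ 2 = ‖w‖ ^ 2 + z ^ 2 := by
    rw [hw, norm_sub_sq_real, norm_smul, hν, real_inner_smul_right, Real.norm_eq_abs, mul_one,
      sq_abs, ← hz]
    ring
  have hform : B v v = a * ‖w‖ ^ 2 + 2 * (z * B w ν) + z ^ 2 * B ν ν := by
    rw [← htan w horth, show v = w + z • ν by rw [hw]; abel]
    simp only [map_add, map_smul, _root_.add_apply, _root_.smul_apply, smul_eq_mul]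
    linear_combination z * hB ν w
  have hcross : -(|z| * (C * a * ‖w‖)) ≤ z * B w ν := by
    refine neg_le_of_abs_le ?_
    rw [abs_mul]
    exact mul_le_mul_of_nonneg_left (hmix w horth) (abs_nonneg z)
  have hsquare : 0 ≤ a * (‖w‖ - 2 * C * |z|) ^ 2 := by positivity
  have hz2 : 0 ≤ a * z ^ 2 := by positivity
  rw [hform, hnorm]
  linear_combination 2 * hcross + hsquare / 2 + hz2 / 2 + 2 * C ^ 2 * a * sq_abs z

end NormalForm

section FormMatrix

variable {n k : ℕ} {B : Euc n →L[ℝ] Euc n →L[ℝ] ℝ} {ν : Euc n} {a C : ℝ}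

lemma trace_formMatrix_of_tangential (hB : ∀ v w, B v w = B w v) (hν : ‖ν‖ = 1)
    (htan : ∀ w, ⟪w, ν⟫ = 0 → B w w = a * ‖w‖ ^ 2) :
    (formMatrix B).trace = (n - 1) * a + B ν ν := by
  have hentry (i : Fin n) : formMatrix B i i = a + 2 * (ν i * B (EuclideanSpace.single i 1) ν) -
      (a + B ν ν) * ν i ^ 2 := by
    rw [formMatrix, apply_self_eq_of_tangential hB hν htan]
    simp [EuclideanSpace.inner_single_left]
  have hnorm : ∑ i, ν i ^ 2 = 1 := by
    have := EuclideanSpace.real_norm_sq_eq ν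
    rw [hν, one_pow] at this
    exact this.symm
  have hsum : ∑ i, ν i * B (EuclideanSpace.single i 1) ν = B ν ν := by
    rw [apply_eq_sum_formMatrix B ν ν]
    refine Finset.sum_congr rfl fun i _ => ?_
    rw [apply_eq_sum_formMatrix, Finset.sum_eq_single i (fun j _ hj => by simp [hj]) (by simp),
      Finset.mul_sum]
    simp [mul_assoc]
  rw [Matrix.trace]
  simp only [diag_apply, hentry, Finset.sum_sub_distrib, Finset.sum_add_distrib, ← Finset.mul_sum,
    hnorm, hsum, Finset.sum_const, Finset.card_univ, Fintype.card_fin, nsmul_eq_mul]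
  ring

lemma exists_formMatrix_eq_smul_one_add_vecMulVec {L : ℝ} (hL : 0 ≤ L) (κ : ℝ) (ν : Euc n) :
    ∃ D : Euc n →L[ℝ] Euc n →L[ℝ] ℝ, (∀ v, D v v = κ * ‖v‖ ^ 2 + L * ⟪v, ν⟫ ^ 2) ∧
      formMatrix D = κ • 1 + vecMulVec (fun i => √L * ν i) (fun i => √L * ν i) := by
  obtain ⟨D₀, hD₀⟩ : ∃ D : Euc n →L[ℝ] Euc n →L[ℝ] ℝ, ∀ v w, D v w = ⟪v, w⟫ :=
    ⟨innerSL ℝ, fun _ _ => rfl⟩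
  refine ⟨κ • D₀ + L • (D₀ ν).smulRight (D₀ ν), fun v => ?_, ?_⟩
  · simp only [_root_.add_apply, _root_.smul_apply, ContinuousLinearMap.smulRight_apply, hD₀,
      smul_eq_mul, real_inner_self_eq_norm_sq, real_inner_comm v ν]
    ring
  · have hcoord (i : Fin n) : ⟪ν, EuclideanSpace.single i (1 : ℝ)⟫ = ν i := by
      simp [EuclideanSpace.inner_single_right]
    ext i j
    simp only [formMatrix, _root_.add_apply, _root_.smul_apply,
      ContinuousLinearMap.smulRight_apply, hD₀, inner_single_single, hcoord, Matrix.add_apply,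
      Matrix.smul_apply, vecMulVec_apply, smul_eq_mul]
    linear_combination -(ν i * ν j) * Real.mul_self_sqrt hL

lemma normal_le_of_sigmaMat_le (hk : 1 ≤ k) (hkn : k ≤ n) (hB : (formMatrix B).IsHermitian)
    (hν : ‖ν‖ = 1) (ha : 0 < a) (hσ : sigmaMat k (formMatrix B) ≤ n.choose k * a ^ k) {L : ℝ}
    (hle : ∀ v, a / 2 * ‖v‖ ^ 2 + L * ⟪v, ν⟫ ^ 2 ≤ B v v) :
    L ≤ 2 ^ (k - 1) * n.choose k * a := by
  rcases le_or_gt L 0 with hL | hL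
  · exact hL.trans (by positivity)
  obtain ⟨D, hDapply, hDmat⟩ := exists_formMatrix_eq_smul_one_add_vecMulVec hL.le (a / 2) ν
  have hDcone : InGardingCone k (formMatrix D) := by
    rw [hDmat]
    exact ((inGardingCone_smul_one hkn (half_pos ha)).add_vecMulVec _).1
  have hDσ : L * (a / 2) ^ (k - 1) ≤ sigmaMat k (formMatrix D) := by
    have hnorm : ∑ i, (√L * ν i) ^ 2 = L := by
      simp only [mul_pow, Real.sq_sqrt hL.le, ← Finset.mul_sum,
        ← EuclideanSpace.real_norm_sq_eq, hν, one_pow, mul_one]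
    have hchoose : (1 : ℝ) ≤ (n - 1).choose (k - 1) := by
      exact_mod_cast Nat.choose_pos (Nat.sub_le_sub_right hkn 1)
    rw [hDmat, sigmaMat_smul_one_add_vecMulVec hk hkn (half_pos ha), hnorm]
    refine le_add_of_nonneg_of_le (by positivity) ?_
    gcongr
    exact le_mul_of_one_le_left (by positivity) hchoose
  have hmain : L * (a / 2) ^ (k - 1) ≤ n.choose k * a ^ k :=
    calc L * (a / 2) ^ (k - 1) ≤ sigmaMat k (formMatrix D) := hDσ
      _ ≤ sigmaMat k (formMatrix B) :=
        sigmaMat_formMatrix_le hDcone hB fun v => (hDapply v).trans_le (hle v)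
      _ ≤ n.choose k * a ^ k := hσ
  obtain ⟨j, rfl⟩ := Nat.exists_eq_add_of_le' hk
  rw [Nat.add_sub_cancel] at hmain ⊢
  rw [div_pow, ← mul_div_assoc, div_le_iff₀ (by positivity), pow_succ] at hmain
  refine le_of_mul_le_mul_right (hmain.trans_eq ?_) (pow_pos ha j)
  ring

theorem normal_bounds_of_tangential (hk : 1 ≤ k) (hkn : k ≤ n) (hB : (formMatrix B).IsHermitian)
    (hσ : sigmaMat k (formMatrix B) = 1) (htr : 0 ≤ (formMatrix B).trace) (hν : ‖ν‖ = 1)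
    (ha : 0 < a) (hak : 1 ≤ n.choose k * a ^ k) (htan : ∀ w, ⟪w, ν⟫ = 0 → B w w = a * ‖w‖ ^ 2)
    (hmix : ∀ w, ⟪w, ν⟫ = 0 → |B w ν| ≤ C * a * ‖w‖) :
    -(n * a) ≤ B ν ν ∧ B ν ν ≤ (2 * C ^ 2 + 1 + 2 ^ (k - 1) * n.choose k) * a := by
  have hsymm := apply_comm_of_isHermitian hB
  constructor
  · rw [trace_formMatrix_of_tangential hsymm hν htan] at htr
    linarith
  · have := normal_le_of_sigmaMat_le hk hkn hB hν ha (hσ.trans_le hak)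
      (le_apply_self_of_tangential hsymm hν ha.le htan hmix)
    linarith

end FormMatrix

section Limit

variable {n k : ℕ} {Ω₁ K : Set (Euc n)} {ε M : ℝ} {u : Euc n → ℝ} {x : Euc n}

lemma hessianWithin_eq_formMatrix (hK : UniqueDiffOn ℝ K) (hx : x ∈ K) :
    hessianWithin u K x = formMatrix (fderivWithin ℝ (fderivWithin ℝ u K) K x) := by
  ext i j
  exact iteratedFDerivWithin_two_apply _ hK hx _

lemma continuousOn_hessianWithin (hK : UniqueDiffOn ℝ K) (hu : ContDiffOn ℝ 2 u K) :
    ContinuousOn (hessianWithin u K) K := by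
  have hcont := (hu.fderivWithin hK (m := 1) (by norm_num)).continuousOn_fderivWithin hK le_rfl
  refine continuousOn_pi.2 fun i => continuousOn_pi.2 fun j => ?_
  refine ContinuousOn.congr ?_ fun x hx =>
    congrFun₂ (hessianWithin_eq_formMatrix hK hx) i j
  exact (hcont.clm_apply continuousOn_const).clm_apply continuousOn_const

lemma IsSol.hessianWithin_of_mem_ringSet (hu : IsSol k Ω₁ 0 ε M u) (hk : 1 ≤ k) (hkn : k ≤ n)
    (hK : UniqueDiffOn ℝ (ringSet Ω₁ 0 ε)) (hx : x ∈ ringSet Ω₁ 0 ε) :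
    (hessianWithin u (ringSet Ω₁ 0 ε) x).IsHermitian ∧
      sigmaMat k (hessianWithin u (ringSet Ω₁ 0 ε) x) = 1 ∧
      0 ≤ (hessianWithin u (ringSet Ω₁ 0 ε) x).trace := by
  have hherm : IsClosed {A : Matrix (Fin n) (Fin n) ℝ | A.IsHermitian} :=
    isClosed_eq continuous_id.matrix_conjTranspose continuous_id
  have hclosed : IsClosed ({A : Matrix (Fin n) (Fin n) ℝ | A.IsHermitian} ∩ sigmaMat k ⁻¹' {1} ∩
      {A | 0 ≤ A.trace}) :=
    ((continuousOn_sigmaMat hkn).preimage_isClosed_of_isClosed hherm isClosed_singleton).inter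
      (isClosed_le continuous_const continuous_id.matrix_trace)
  have hmaps : MapsTo (hessianWithin u (ringSet Ω₁ 0 ε)) (Ω₁ \ closedBall 0 ε)
      ({A : Matrix (Fin n) (Fin n) ℝ | A.IsHermitian} ∩ sigmaMat k ⁻¹' {1} ∩
        {A | 0 ≤ A.trace}) := fun y hy =>
    ⟨⟨(hu.2.1 y hy).1.isHermitian, (hu.2.1 y hy).2⟩, ((hu.2.1 y hy).1.trace_pos hk).le⟩
  have hmem := hmaps.closure_of_continuousOn (continuousOn_hessianWithin hK hu.1) hx
  rw [hclosed.closure_eq] at hmem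
  exact ⟨hmem.1.1, hmem.1.2, hmem.2⟩

end Limit

/-! ### Barriers for solutions -/

section Comparison

variable {n k : ℕ} {S : Set (Euc n)} {f g v w : Euc n → ℝ}

/-- Pointwise form of the equation solved by strictly `k`-convex solutions: `σ_k(D²f(x)) = 1` with
`D²f(x)` in the Gårding cone. Unlike `IsSol` it does not refer to a domain. -/
def SolvesHessianEqAt (k : ℕ) (f : Euc n → ℝ) (x : Euc n) : Prop :=
  ∃ B, HasSecondFDerivAt f B x ∧ InGardingCone k (formMatrix B) ∧ sigmaMat k (formMatrix B) = 1

lemma solvesHessianEqAt_of_hessianWithin {K : Set (Euc n)} {x : Euc n} (hf : ContDiffOn ℝ 2 f K)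
    (hK : K ∈ 𝓝 x)
    (hx : InGardingCone k (hessianWithin f K x) ∧ sigmaMat k (hessianWithin f K x) = 1) :
    SolvesHessianEqAt k f x := by
  obtain ⟨B, hB, hmat⟩ := exists_hasSecondFDerivAt_formMatrix_eq hf hK
  rw [← hmat] at hx
  exact ⟨B, hB, hx⟩

lemma SolvesHessianEqAt.add_const {x : Euc n} (hf : SolvesHessianEqAt k f x) (c : ℝ) :
    SolvesHessianEqAt k (fun y => f y + c) x := by
  obtain ⟨B, hB, hcone⟩ := hf
  exact ⟨B, hB.add_const c, hcone⟩

theorem le_on_closure_of_sigmaMat_lt (hSo : IsOpen S) (hSb : IsBounded S)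
    (hv : ContinuousOn v (closure S)) (hw : ContinuousOn w (closure S))
    (hfr : ∀ x ∈ frontier S, v x ≤ w x)
    (hlt : ∀ x ∈ S, ∃ B C, HasSecondFDerivAt v B x ∧ HasSecondFDerivAt w C x ∧
      InGardingCone k (formMatrix B) ∧ sigmaMat k (formMatrix C) < sigmaMat k (formMatrix B)) :
    ∀ x ∈ closure S, v x ≤ w x := by
  refine le_of_sigmaMat_lt (k := k) hSb.isCompact_closure hv hw fun x hx => ?_
  by_cases hxS : x ∈ S
  · exact Or.inr ⟨mem_of_superset (hSo.mem_nhds hxS) subset_closure, hlt x hxS⟩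
  · exact Or.inl (hfr x (hSo.frontier_eq ▸ ⟨hx, hxS⟩))

lemma formMatrix_smul_innerSL (κ : ℝ) :
    formMatrix (κ • innerSL ℝ : Euc n →L[ℝ] Euc n →L[ℝ] ℝ) = κ • 1 := by
  rw [← formMatrix_innerSL]
  rfl

lemma le_quadratic_of_solvesHessianEqAt (hkn : k ≤ n) (hSo : IsOpen S) (hSb : IsBounded S)
    (hf : ContinuousOn f (closure S)) (hsol : ∀ x ∈ S, SolvesHessianEqAt k f x) {d c : ℝ}
    (hd : n.choose k * d ^ k < 1) (hfr : ∀ x ∈ frontier S, f x ≤ d / 2 * (‖x‖ ^ 2 - c)) :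
    ∀ x ∈ closure S, f x ≤ d / 2 * (‖x‖ ^ 2 - c) := by
  refine le_on_closure_of_sigmaMat_lt (k := k) hSo hSb hf (by fun_prop) hfr fun x hx => ?_
  obtain ⟨B, hB, hcone, hσ⟩ := hsol x hx
  refine ⟨B, _, hB, hasSecondFDerivAt_quadratic d c x, hcone, ?_⟩
  rwa [hσ, formMatrix_smul_innerSL, sigmaMat_smul_one hkn]

lemma quadratic_le_of_solvesHessianEqAt (hkn : k ≤ n) (hSo : IsOpen S) (hSb : IsBounded S)
    (hf : ContinuousOn f (closure S)) (hsol : ∀ x ∈ S, SolvesHessianEqAt k f x) {κ c : ℝ}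
    (hκ0 : 0 < κ) (hκ : 1 < n.choose k * κ ^ k)
    (hfr : ∀ x ∈ frontier S, κ / 2 * (‖x‖ ^ 2 - c) ≤ f x) :
    ∀ x ∈ closure S, κ / 2 * (‖x‖ ^ 2 - c) ≤ f x := by
  refine le_on_closure_of_sigmaMat_lt (k := k) hSo hSb (by fun_prop) hf hfr fun x hx => ?_
  obtain ⟨B, hB, -, hσ⟩ := hsol x hx
  refine ⟨_, B, hasSecondFDerivAt_quadratic κ c x, hB, ?_, ?_⟩
  · rw [formMatrix_smul_innerSL]
    exact inGardingCone_smul_one hkn hκ0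
  · rwa [hσ, formMatrix_smul_innerSL, sigmaMat_smul_one hkn]

lemma const_mul_le_of_solvesHessianEqAt (hk : 1 ≤ k) (hSo : IsOpen S) (hSb : IsBounded S)
    (hg : ContinuousOn g (closure S)) (hf : ContinuousOn f (closure S))
    (hgsol : ∀ x ∈ S, SolvesHessianEqAt k g x) (hfsol : ∀ x ∈ S, SolvesHessianEqAt k f x) {r : ℝ}
    (hr : 1 < r) (hfr : ∀ x ∈ frontier S, r * g x ≤ f x) : ∀ x ∈ closure S, r * g x ≤ f x := by
  refine le_on_closure_of_sigmaMat_lt (k := k) hSo hSb (by fun_prop) hf hfr fun x hx => ?_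
  obtain ⟨B, hB, hcone, hσ⟩ := hgsol x hx
  obtain ⟨C, hC, -, hσ'⟩ := hfsol x hx
  obtain ⟨hcone', hσr⟩ := hcone.smul (zero_lt_one.trans hr)
  refine ⟨r • B, C, hB.const_mul r, hC, hcone', ?_⟩
  rw [hσ', show formMatrix (r • B) = r • formMatrix B from rfl, hσr, hσ, mul_one]
  exact one_lt_pow₀ hr (Nat.one_le_iff_ne_zero.1 hk)

end Comparison

section SolutionBarriers

variable {n k : ℕ} {Ω₁ : Set (Euc n)} {ε M : ℝ} {u : Euc n → ℝ}

lemma norm_eq_or_mem_frontier_of_mem_frontier_ring (hΩo : IsOpen Ω₁) (hε : 0 < ε)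
    (hball : closedBall (0 : Euc n) ε ⊆ Ω₁) {x : Euc n} (hx : x ∈ frontier (Ω₁ \ closedBall 0 ε)) :
    ‖x‖ = ε ∨ x ∈ frontier Ω₁ := by
  rw [(hΩo.sdiff isClosed_closedBall).frontier_eq] at hx
  exact (or_assoc.2 (norm_eq_or_mem_of_mem_ringSet hΩo hε hball hx.1)).resolve_right hx.2

namespace IsSol

lemma solvesHessianEqAt (hu : IsSol k Ω₁ 0 ε M u) (hΩo : IsOpen Ω₁) {x : Euc n}
    (hx : x ∈ Ω₁ \ closedBall 0 ε) : SolvesHessianEqAt k u x :=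
  solvesHessianEqAt_of_hessianWithin hu.1 (ringSet_mem_nhds hΩo hx) (hu.2.1 x hx)

lemma apply_of_norm_eq (hu : IsSol k Ω₁ 0 ε M u) {x : Euc n} (hx : ‖x‖ = ε) : u x = -M :=
  hu.2.2.2 x (mem_sphere_zero_iff_norm.2 hx)

lemma nonpos (hu : IsSol k Ω₁ 0 ε M u) (hΩo : IsOpen Ω₁) (hΩb : IsBounded Ω₁) (hε : 0 < ε)
    (hball : closedBall (0 : Euc n) ε ⊆ Ω₁) (hk : 1 ≤ k) (hkn : k ≤ n) (hM : 0 ≤ M) :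
    ∀ x ∈ ringSet Ω₁ 0 ε, u x ≤ 0 := by
  have hle := le_quadratic_of_solvesHessianEqAt hkn (hΩo.sdiff isClosed_closedBall)
    (hΩb.subset sdiff_subset) hu.1.continuousOn (fun x hx => hu.solvesHessianEqAt hΩo hx)
    (d := 0) (c := 0) (by simp [Nat.one_le_iff_ne_zero.1 hk]) fun x hx => ?_
  · intro x hx
    simpa using hle x hx
  · rcases norm_eq_or_mem_frontier_of_mem_frontier_ring hΩo hε hball hx with h | h
    · simpa [hu.apply_of_norm_eq h] using hM
    · simp [hu.2.2.1 x h]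

lemma quadratic_sub_le (hu : IsSol k Ω₁ 0 ε M u) (hΩo : IsOpen Ω₁) (hΩb : IsBounded Ω₁) (hε : 0 < ε)
    (hball : closedBall (0 : Euc n) ε ⊆ Ω₁) (hkn : k ≤ n) {κ : ℝ} (hκ0 : 0 < κ)
    (hκ : 1 < n.choose k * κ ^ k)
    (hfr : ∀ x ∈ frontier Ω₁, κ / 2 * (‖x‖ ^ 2 - ε ^ 2) ≤ M) :
    ∀ x ∈ ringSet Ω₁ 0 ε, κ / 2 * (‖x‖ ^ 2 - ε ^ 2) ≤ u x + M := by
  refine quadratic_le_of_solvesHessianEqAt hkn (hΩo.sdiff isClosed_closedBall)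
    (hΩb.subset sdiff_subset) (hu.1.continuousOn.add continuousOn_const)
    (fun x hx => (hu.solvesHessianEqAt hΩo hx).add_const M) hκ0 hκ fun x hx => ?_
  rcases norm_eq_or_mem_frontier_of_mem_frontier_ring hΩo hε hball hx with h | h
  · simp [hu.apply_of_norm_eq h, h]
  · simpa [hu.2.2.1 x h] using hfr x h

lemma const_mul_le (hu : IsSol k Ω₁ 0 ε M u) (hΩo : IsOpen Ω₁) (hΩb : IsBounded Ω₁) (hε : 0 < ε)
    (hball : closedBall (0 : Euc n) ε ⊆ Ω₁) (hk : 1 ≤ k) {ψ : Euc n → ℝ}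
    (hψ : ContinuousOn ψ (closure Ω₁))
    (hψsol : ∀ x ∈ Ω₁, SolvesHessianEqAt k ψ x) (hψfr : ∀ x ∈ frontier Ω₁, ψ x = 0) {r : ℝ}
    (hr : 1 < r) (hr_ball : ∀ x ∈ closedBall 0 ε, r * ψ x ≤ -M) :
    ∀ x ∈ ringSet Ω₁ 0 ε, r * ψ x ≤ u x := by
  refine const_mul_le_of_solvesHessianEqAt hk (hΩo.sdiff isClosed_closedBall)
    (hΩb.subset sdiff_subset) (hψ.mono ringSet_subset_closure) hu.1.continuousOn
    (fun x hx => hψsol x hx.1) (fun x hx => hu.solvesHessianEqAt hΩo hx) hr fun x hx => ?_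
  rcases norm_eq_or_mem_frontier_of_mem_frontier_ring hΩo hε hball hx with h | h
  · rw [hu.apply_of_norm_eq h]
    exact hr_ball x (by simp [h])
  · simp [hψfr x h, hu.2.2.1 x h]

end IsSol

lemma cnk_pos (hkn : k ≤ n) : 0 < cnk n k :=
  Real.rpow_pos_of_pos (by exact_mod_cast Nat.choose_pos hkn) _

lemma choose_mul_inv_cnk_pow (hk : 1 ≤ k) (hkn : k ≤ n) :
    (n.choose k : ℝ) * (cnk n k)⁻¹ ^ k = 1 := by
  have hpow : cnk n k ^ k = n.choose k := by
    rw [cnk, one_div, Real.rpow_inv_natCast_pow (by positivity) (Nat.one_le_iff_ne_zero.1 hk)]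
  rw [← hpow, ← mul_pow, mul_inv_cancel₀ (cnk_pos hkn).ne', one_pow]

section Outer

variable {ε₀ : ℝ} {ψ : Euc n → ℝ}

lemma exists_le_neg_of_solvesHessianEqAt (hk : 1 ≤ k) (hkn : k ≤ n) (hΩo : IsOpen Ω₁)
    (hΩb : IsBounded Ω₁) (hε₀ : 0 ≤ ε₀) (hball : closedBall (0 : Euc n) ε₀ ⊆ Ω₁)
    (hψ : ContinuousOn ψ (closure Ω₁)) (hψsol : ∀ x ∈ Ω₁, SolvesHessianEqAt k ψ x)
    (hψfr : ∀ x ∈ frontier Ω₁, ψ x = 0) : ∃ m, 0 < m ∧ ∀ x ∈ closedBall 0 ε₀, ψ x ≤ -m := by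
  obtain ⟨r, hr, hfr⟩ := exists_lt_norm_of_mem_frontier hΩo hε₀ hball
  set d := (cnk n k)⁻¹ / 2
  have hc : 0 < (cnk n k)⁻¹ := inv_pos.2 (cnk_pos hkn)
  have hd0 : 0 < d := half_pos hc
  have hd1 : n.choose k * d ^ k < 1 := by
    rw [← choose_mul_inv_cnk_pow hk hkn]
    have : (0 : ℝ) < n.choose k := by exact_mod_cast Nat.choose_pos hkn
    gcongr
    exact half_lt_self hc
  have hle := le_quadratic_of_solvesHessianEqAt hkn hΩo hΩb hψ hψsol (c := r ^ 2) hd1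
    fun x hx => by
      have := hfr x hx
      rw [hψfr x hx]
      exact mul_nonneg (half_pos hd0).le (sub_nonneg.2 (by gcongr; linarith))
  refine ⟨d / 2 * (r ^ 2 - ε₀ ^ 2), mul_pos (half_pos hd0) (sub_pos.2 (by gcongr)), fun x hx => ?_⟩
  have hx' : ‖x‖ ≤ ε₀ := mem_closedBall_zero_iff.1 hx
  calc ψ x ≤ d / 2 * (‖x‖ ^ 2 - r ^ 2) := hle x (subset_closure (hball hx))
    _ ≤ d / 2 * (ε₀ ^ 2 - r ^ 2) := by gcongr
    _ = -(d / 2 * (r ^ 2 - ε₀ ^ 2)) := by ring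

theorem exists_neg_mul_norm_sub_le (hk : 1 ≤ k) (hkn : k ≤ n) (hΩo : IsOpen Ω₁)
    (hΩconv : Convex ℝ Ω₁) (hΩb : IsBounded Ω₁) (hε₀ : 0 ≤ ε₀)
    (hball : closedBall (0 : Euc n) ε₀ ⊆ Ω₁) (hψ : ContDiffOn ℝ 2 ψ (closure Ω₁))
    (hψsol : ∀ x ∈ Ω₁, SolvesHessianEqAt k ψ x) (hψfr : ∀ x ∈ frontier Ω₁, ψ x = 0)
    (hM : 0 ≤ M) :
    ∃ Λ, 0 ≤ Λ ∧ ∀ ε ∈ Ioo 0 ε₀, ∀ u, IsSol k Ω₁ 0 ε M u →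
      ∀ x ∈ frontier Ω₁, ∀ y ∈ ringSet Ω₁ 0 ε, -(Λ * ‖y - x‖) ≤ u y := by
  obtain ⟨m, hm, hψm⟩ := exists_le_neg_of_solvesHessianEqAt hk hkn hΩo hΩb hε₀ hball
    hψ.continuousOn hψsol hψfr
  obtain ⟨L, hL⟩ := hψ.exists_lipschitzOnWith two_ne_zero hΩconv.closure
    hΩb.isCompact_closure
  set r := 2 + M / m with hr
  have hr0 : 0 ≤ M / m := by positivity
  have hrm : r * m = 2 * m + M := by rw [hr]; field_simp
  refine ⟨r * L, by positivity, fun ε hε u hu x hx y hy => ?_⟩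
  have hsub : closedBall (0 : Euc n) ε ⊆ closedBall 0 ε₀ := closedBall_subset_closedBall hε.2.le
  have hψu : r * ψ y ≤ u y := by
    refine hu.const_mul_le hΩo hΩb hε.1 (hsub.trans hball) hk hψ.continuousOn hψsol hψfr
      (by linarith) (fun z hz => ?_) y hy
    nlinarith [hψm z (hsub hz)]
  have hLip : -(L * ‖y - x‖) ≤ ψ y := by
    have := hL.norm_sub_le (ringSet_subset_closure hy) (frontier_subset_closure hx)
    rw [hψfr x hx, sub_zero] at this
    exact neg_le_of_abs_le this
  calc -(r * L * ‖y - x‖) = r * -(L * ‖y - x‖) := by ring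
    _ ≤ r * ψ y := by gcongr
    _ ≤ u y := hψu

end Outer

end SolutionBarriers

/-! ### Comparison with rotated solutions -/

section Rotated

variable {n k : ℕ} {Ω₁ : Set (Euc n)} {ε M κ t : ℝ} {u : Euc n → ℝ} {p : Euc n}

/-- The barrier `(1 - t) u + t q`, where `q = κ (‖x‖² - ε²) / 2 - M` has the same values as `u` on
the sphere of radius `ε`. For `κ > 1 / c_{n,k}` both `q` and the barrier are strict subsolutions. -/
def radialPerturbation (u : Euc n → ℝ) (ε M κ t : ℝ) (x : Euc n) : ℝ :=
  (1 - t) * u x + t * (κ / 2 * (‖x‖ ^ 2 - ε ^ 2) - M)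

namespace IsSol

lemma radialPerturbation_of_norm_eq (hu : IsSol k Ω₁ 0 ε M u) {x : Euc n} (hx : ‖x‖ = ε) :
    radialPerturbation u ε M κ t x = -M := by
  rw [radialPerturbation, hu.apply_of_norm_eq hx, hx]
  ring

lemma exists_hessian_radialPerturbation (hu : IsSol k Ω₁ 0 ε M u) (hk : 1 ≤ k) (hΩo : IsOpen Ω₁)
    {g : ℝ} (hg : 0 < g) (hgk : n.choose k * g ^ k = 1) (hκ : g < κ) (ht : t ∈ Ioo (0 : ℝ) 1)
    {x : Euc n} (hx : x ∈ Ω₁ \ closedBall 0 ε) :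
    ∃ B, HasSecondFDerivAt (radialPerturbation u ε M κ t) B x ∧ InGardingCone k (formMatrix B) ∧
      1 < sigmaMat k (formMatrix B) := by
  obtain ⟨B, hB, hcone, hσ⟩ := hu.solvesHessianEqAt hΩo hx
  obtain ⟨D, hD, hDmat⟩ : ∃ D : Euc n →L[ℝ] Euc n →L[ℝ] ℝ,
      HasSecondFDerivAt (fun y => κ / 2 * (‖y‖ ^ 2 - ε ^ 2)) D x ∧ formMatrix D = κ • 1 :=
    ⟨_, hasSecondFDerivAt_quadratic κ (ε ^ 2) x, formMatrix_smul_innerSL κ⟩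
  refine ⟨_, (hB.const_mul (1 - t)).add ((hD.add_const (-M)).const_mul t), ?_⟩
  have hmat : formMatrix ((1 - t) • B + t • D) = (1 - t) • formMatrix B + (t * κ) • 1 := by
    rw [mul_smul, ← hDmat]
    rfl
  rw [hmat]
  exact hcone.one_lt_sigmaMat_convex_comb hk hσ hg hgk hκ ht

theorem radialPerturbation_le_comp_linearIsometry (hu : IsSol k Ω₁ 0 ε M u) (hk : 1 ≤ k)
    (hkn : k ≤ n) (hΩo : IsOpen Ω₁) (hΩb : IsBounded Ω₁) (hε : 0 < ε)
    (hball : closedBall (0 : Euc n) ε ⊆ Ω₁) {g : ℝ} (hg : 0 < g) (hgk : n.choose k * g ^ k = 1)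
    (hκ : g < κ) (ht : t ∈ Ioo (0 : ℝ) 1) (R : Euc n →ₗᵢ[ℝ] Euc n)
    (hfr : ∀ x ∈ ringSet Ω₁ 0 ε, R x ∈ ringSet Ω₁ 0 ε → x ∈ frontier Ω₁ ∨ R x ∈ frontier Ω₁ →
      radialPerturbation u ε M κ t x ≤ u (R x)) :
    ∀ x ∈ ringSet Ω₁ 0 ε ∩ R ⁻¹' ringSet Ω₁ 0 ε, radialPerturbation u ε M κ t x ≤ u (R x) := by
  have hcont : ContinuousOn u (ringSet Ω₁ 0 ε) := hu.1.continuousOn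
  have hcont' : ContinuousOn (radialPerturbation u ε M κ t) (ringSet Ω₁ 0 ε) :=
    (continuousOn_const.mul hcont).add (by fun_prop)
  refine le_of_sigmaMat_lt (k := k)
    ((isCompact_ringSet hΩb).inter_right (isClosed_closure.preimage R.continuous))
    (hcont'.mono inter_subset_left)
    (hcont.comp R.continuous.continuousOn fun x hx => hx.2) ?_
  rintro x ⟨hx, hRx⟩
  rcases norm_eq_or_mem_of_mem_ringSet hΩo hε hball hx with hxε | hxfr | hxΩ
  · left
    rw [hu.radialPerturbation_of_norm_eq hxε, hu.apply_of_norm_eq ((R.norm_map x).trans hxε)]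
  · exact Or.inl (hfr x hx hRx (Or.inl hxfr))
  rcases norm_eq_or_mem_of_mem_ringSet hΩo hε hball hRx with hRxε | hRxfr | hRxΩ
  · exact absurd hxΩ.2 (by simp [← R.norm_map x, hRxε])
  · exact Or.inl (hfr x hx hRx (Or.inr hRxfr))
  obtain ⟨B, hB, hcone, hσ⟩ := hu.exists_hessian_radialPerturbation hk hΩo hg hgk hκ ht hxΩ
  obtain ⟨C, hC, hCcone, hCσ⟩ := hu.solvesHessianEqAt hΩo hRxΩ
  refine Or.inr ⟨inter_mem (ringSet_mem_nhds hΩo hxΩ)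
    (R.continuous.continuousAt (ringSet_mem_nhds hΩo hRxΩ)), B, _, hB,
    hC.comp_clm R.toContinuousLinearMap, hcone, ?_⟩
  rwa [sigmaMat_formMatrix_bilinearComp hCcone.isHermitian hkn, hCσ]

lemma radialPerturbation_le_of_mem_frontier (hu : IsSol k Ω₁ 0 ε M u)
    (hu0 : ∀ x ∈ ringSet Ω₁ 0 ε, u x ≤ 0) {Λ M' δ : ℝ} (hΛ : 0 ≤ Λ)
    (hΛu : ∀ x ∈ frontier Ω₁, ∀ y ∈ ringSet Ω₁ 0 ε, -(Λ * ‖y - x‖) ≤ u y)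
    (hM' : M' ≤ M) (hκM' : ∀ x ∈ frontier Ω₁, κ / 2 * (‖x‖ ^ 2 - ε ^ 2) ≤ M')
    (ht : t ∈ Ioo (0 : ℝ) 1) (hδ : Λ * δ ≤ t * (M - M')) {R : Euc n →ₗᵢ[ℝ] Euc n} {x : Euc n}
    (hx : x ∈ ringSet Ω₁ 0 ε) (hRx : R x ∈ ringSet Ω₁ 0 ε) (hRδ : ‖R x - x‖ ≤ δ)
    (hfr : x ∈ frontier Ω₁ ∨ R x ∈ frontier Ω₁) :
    radialPerturbation u ε M κ t x ≤ u (R x) := by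
  obtain ⟨ht0, ht1⟩ := ht
  have hquad : t * (κ / 2 * (‖x‖ ^ 2 - ε ^ 2) - M) ≤ -(t * (M - M')) := by
    have : κ / 2 * (‖x‖ ^ 2 - ε ^ 2) ≤ M' :=
      hfr.elim (hκM' x) fun h => by simpa using hκM' _ h
    nlinarith
  rw [radialPerturbation]
  rcases hfr with h | h
  · have hΛδ : Λ * ‖R x - x‖ ≤ Λ * δ := by gcongr
    rw [hu.2.2.1 x h]
    linarith [hΛu x h _ hRx]
  · rw [hu.2.2.1 _ h]
    have := mul_nonneg ht0.le (sub_nonneg.2 hM')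
    have := mul_nonpos_of_nonneg_of_nonpos (sub_nonneg.2 ht1.le) (hu0 x hx)
    linarith

end IsSol

lemma hasFDerivWithinAt_radialPerturbation {F : Euc n →L[ℝ] ℝ} {S : Set (Euc n)}
    (hF : HasFDerivWithinAt u F S p) :
    HasFDerivWithinAt (radialPerturbation u ε M κ t)
      ((1 - t) • F + t • (κ • innerSL ℝ : Euc n →L[ℝ] Euc n →L[ℝ] ℝ) p) S p :=
  (hF.const_mul (1 - t)).add
    ((((hasFDerivAt_quadratic κ (ε ^ 2) p).hasFDerivWithinAt).sub_const M).const_mul t)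

namespace IsSol

lemma mul_sq_le_normal_derivative (hu : IsSol k Ω₁ 0 ε M u) (hΩo : IsOpen Ω₁) (hε : 0 < ε)
    (hball : closedBall (0 : Euc n) ε ⊆ Ω₁)
    (hquad : ∀ x ∈ ringSet Ω₁ 0 ε, κ / 2 * (‖x‖ ^ 2 - ε ^ 2) ≤ u x + M) {F : Euc n →L[ℝ] ℝ}
    (hF : HasFDerivWithinAt u F (ringSet Ω₁ 0 ε) p) (hp : ‖p‖ = ε) : κ * ε ^ 2 ≤ F p := by
  have hle := apply_le_apply_of_le_on (hasFDerivAt_quadratic κ (ε ^ 2) p).hasFDerivWithinAt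
    (hF.add_const M) hquad (by simp [hu.apply_of_norm_eq hp, hp])
    (self_mem_posTangentConeAt_ringSet hΩo hε (hball (by simp [hp])) hp)
  rwa [_root_.smul_apply, _root_.smul_apply, innerSL_apply_apply, real_inner_self_eq_norm_sq, hp,
    smul_eq_mul] at hle

lemma mul_normal_derivative_le_comp_linearIsometry (hu : IsSol k Ω₁ 0 ε M u) (hΩo : IsOpen Ω₁)
    (hε : 0 < ε) (hball : closedBall (0 : Euc n) ε ⊆ Ω₁) (hκ : 0 ≤ κ) (ht : 0 ≤ t)
    (R : Euc n →ₗᵢ[ℝ] Euc n)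
    (hR : ∀ x ∈ ringSet Ω₁ 0 ε ∩ R ⁻¹' ringSet Ω₁ 0 ε, radialPerturbation u ε M κ t x ≤ u (R x))
    {F F' : Euc n →L[ℝ] ℝ} (hF : HasFDerivWithinAt u F (ringSet Ω₁ 0 ε) p)
    (hF' : HasFDerivWithinAt u F' (ringSet Ω₁ 0 ε) (R p)) (hp : ‖p‖ = ε) :
    (1 - t) * F p ≤ F' (R p) := by
  have hRp : ‖R p‖ = ε := (R.norm_map p).trans hp
  have hmem {q : Euc n} (hq : ‖q‖ = ε) : ∀ᶠ r in 𝓝[>] (0 : ℝ), q + r • q ∈ ringSet Ω₁ 0 ε :=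
    (eventually_add_smul_self_mem hΩo hε (hball (by simp [hq])) hq).mono
      fun _ h => subset_closure h
  have hcone : p ∈ posTangentConeAt (ringSet Ω₁ 0 ε ∩ R ⁻¹' ringSet Ω₁ 0 ε) p := by
    refine mem_posTangentConeAt_of_frequently_mem (Eventually.frequently ?_)
    filter_upwards [hmem hp, hmem hRp] with r hr hRr
    exact ⟨hr, by simpa using hRr⟩
  have hle := apply_le_apply_of_le_on
    (hasFDerivWithinAt_radialPerturbation (hF.mono inter_subset_left))
    (hF'.comp p R.toContinuousLinearMap.hasFDerivWithinAt fun x hx => hx.2) hR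
    ((hu.radialPerturbation_of_norm_eq hp).trans (hu.apply_of_norm_eq hRp).symm) hcone
  have hinner : 0 ≤ t * (κ * ⟪p, p⟫) :=
    mul_nonneg ht (mul_nonneg hκ real_inner_self_nonneg)
  change (1 - t) * F p + t * (κ * ⟪p, p⟫) ≤ F' (R p) at hle
  linarith

end IsSol

end Rotated

/-! ### The double normal derivative -/

section NormalBound

variable {n k : ℕ} {Ω₁ : Set (Euc n)} {ε M κ C : ℝ} {u : Euc n → ℝ} {p : Euc n}

lemma exists_linearIsometry_eq_circleArc (hε : 0 < ε) {τ : Euc n} (hp : ‖p‖ = ε) (hτ : ‖τ‖ = ε)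
    (hpτ : ⟪p, τ⟫ = 0) (θ : ℝ) :
    ∃ R : Euc n →ₗᵢ[ℝ] Euc n, R p = circleArc p τ θ ∧ ∀ x, ‖R x - x‖ ≤ |θ| * ‖x‖ := by
  have hunit {q : Euc n} (hq : ‖q‖ = ε) : ‖ε⁻¹ • q‖ = 1 := by
    rw [norm_smul, hq, norm_inv, Real.norm_of_nonneg hε.le, inv_mul_cancel₀ hε.ne']
  have horth : ⟪ε⁻¹ • p, ε⁻¹ • τ⟫ = 0 := by
    rw [real_inner_smul_left, real_inner_smul_right, hpτ, mul_zero, mul_zero]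
  refine ⟨⟨planeRotation (ε⁻¹ • p) (ε⁻¹ • τ) θ,
    norm_planeRotation (hunit hp) (hunit hτ) horth θ⟩, ?_,
    norm_planeRotation_sub_le (hunit hp) (hunit hτ) horth θ⟩
  have happly := congrArg (ε • ·) (planeRotation_apply_left (hunit hp) horth θ)
  simpa [circleArc, smul_smul, mul_left_comm ε, hε.ne'] using happly

lemma exists_quadratic_le_on_frontier {g M₁ : ℝ} {P : ℝ → Prop} (hM₁ : 0 < M₁) (hM : M₁ < M)
    (hg : 0 < g)
    (hsub : ∀ ε, P ε → ∀ x ∈ frontier Ω₁, g / 2 * (‖x‖ ^ 2 - ε ^ 2) ≤ M₁) :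
    ∃ κ M', g < κ ∧ M' < M ∧
      ∀ ε, P ε → ∀ x ∈ frontier Ω₁, κ / 2 * (‖x‖ ^ 2 - ε ^ 2) ≤ M' := by
  obtain ⟨r, hr, hrM⟩ : ∃ r, 1 < r ∧ r * M₁ < M := by
    obtain ⟨r, hr1, hr2⟩ := exists_between ((one_lt_div hM₁).2 hM)
    exact ⟨r, hr1, (lt_div_iff₀ hM₁).1 hr2⟩
  refine ⟨r * g, r * M₁, lt_mul_of_one_lt_left hg hr, hrM, fun ε hε x hx => ?_⟩
  calc r * g / 2 * (‖x‖ ^ 2 - ε ^ 2) = r * (g / 2 * (‖x‖ ^ 2 - ε ^ 2)) := by ring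
    _ ≤ r * M₁ := by gcongr; exact hsub ε hε x hx

namespace IsSol

theorem eventually_normal_derivative_le_circleArc (hu : IsSol k Ω₁ 0 ε M u) (hk : 1 ≤ k)
    (hkn : k ≤ n) (hΩo : IsOpen Ω₁) (hΩb : IsBounded Ω₁) (hε : 0 < ε)
    (hball : closedBall (0 : Euc n) ε ⊆ Ω₁) {F : Euc n → Euc n →L[ℝ] ℝ}
    (hF : ∀ x ∈ ringSet Ω₁ 0 ε, HasFDerivWithinAt u (F x) (ringSet Ω₁ 0 ε) x)
    {g : ℝ} (hg : 0 < g) (hgk : n.choose k * g ^ k = 1) (hκ : g < κ)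
    {Λ M' r : ℝ} (hΛ : 0 ≤ Λ)
    (hΛu : ∀ x ∈ frontier Ω₁, ∀ y ∈ ringSet Ω₁ 0 ε, -(Λ * ‖y - x‖) ≤ u y)
    (hM : 0 ≤ M) (hM' : M' ≤ M)
    (hκM' : ∀ x ∈ frontier Ω₁, κ / 2 * (‖x‖ ^ 2 - ε ^ 2) ≤ M') (hr : ∀ x ∈ closure Ω₁, ‖x‖ ≤ r)
    (hC : 0 < C) (hΛC : Λ * r ≤ C * (M - M')) {τ : Euc n} (hp : ‖p‖ = ε) (hτ : ‖τ‖ = ε)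
    (hpτ : ⟪p, τ⟫ = 0) :
    ∀ᶠ θ in 𝓝[>] (0 : ℝ), (1 - C * θ) * F p p ≤ F (circleArc p τ θ) (circleArc p τ θ) := by
  have hmem {q : Euc n} (hq : ‖q‖ = ε) := mem_ringSet_of_norm_eq hΩo hε hball hq
  filter_upwards [Ioo_mem_nhdsGT (inv_pos.2 hC)] with θ hθ
  obtain ⟨R, hRp, hRsub⟩ := exists_linearIsometry_eq_circleArc hε hp hτ hpτ θ
  have ht : C * θ ∈ Ioo (0 : ℝ) 1 := by
    refine ⟨mul_pos hC hθ.1, ?_⟩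
    rw [mul_comm, ← lt_inv_mul_iff₀' hC, mul_one]
    exact hθ.2
  have hδ : Λ * (θ * r) ≤ C * θ * (M - M') := by
    have := mul_le_mul_of_nonneg_left hΛC hθ.1.le
    linarith
  have hRδ {x : Euc n} (hx : x ∈ ringSet Ω₁ 0 ε) : ‖R x - x‖ ≤ θ * r := by
    refine (hRsub x).trans ?_
    rw [abs_of_pos hθ.1]
    exact mul_le_mul_of_nonneg_left (hr x (ringSet_subset_closure hx)) hθ.1.le
  have hcomp := hu.radialPerturbation_le_comp_linearIsometry hk hkn hΩo hΩb hε hball hg hgk hκ ht R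
    fun x hx hRx => hu.radialPerturbation_le_of_mem_frontier
      (hu.nonpos hΩo hΩb hε hball hk hkn hM) hΛ hΛu hM' hκM' ht hδ hx hRx (hRδ hx)
  rw [← hRp]
  exact hu.mul_normal_derivative_le_comp_linearIsometry hΩo hε hball (hg.trans hκ).le ht.1.le R
    hcomp (hF p (hmem hp)) (hF _ (hmem ((R.norm_map p).trans hp))) hp

theorem second_normal_derivative_mem_Icc_of_circleArc (hu : IsSol k Ω₁ 0 ε M u) (hk : 1 ≤ k)
    (hkn : k ≤ n) (hK : UniqueDiffOn ℝ (ringSet Ω₁ 0 ε)) (hε : 0 < ε)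
    (hS : sphere 0 ε ⊆ ringSet Ω₁ 0 ε) (hp : ‖p‖ = ε) {F : Euc n → Euc n →L[ℝ] ℝ}
    (hF : F = fderivWithin ℝ u (ringSet Ω₁ 0 ε))
    (hκ : 0 < κ) (hκk : 1 ≤ n.choose k * κ ^ k) (hnormal : κ * ε ^ 2 ≤ F p p)
    (harc : ∀ τ, ‖τ‖ = ε → ⟪p, τ⟫ = 0 →
      ∀ᶠ θ in 𝓝[>] (0 : ℝ), (1 - C * θ) * F p p ≤ F (circleArc p τ θ) (circleArc p τ θ)) :
    iteratedFDerivWithin ℝ 2 u (ringSet Ω₁ 0 ε) p ![ε⁻¹ • p, ε⁻¹ • p] ∈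
      Icc (-(n * (F p p / ε ^ 2)))
        ((2 * C ^ 2 + 1 + 2 ^ (k - 1) * n.choose k) * (F p p / ε ^ 2)) := by
  have hpK : p ∈ ringSet Ω₁ 0 ε := hS (mem_sphere_zero_iff_norm.2 hp)
  set H := fderivWithin ℝ F (ringSet Ω₁ 0 ε) p with hH
  have hFS (x : Euc n) (hx : x ∈ sphere 0 ε) : HasFDerivWithinAt u (F x) (sphere 0 ε) x := by
    rw [hF]
    exact (hu.1.differentiableOn two_ne_zero x (hS hx)).hasFDerivWithinAt.mono hS
  have hHS : HasFDerivWithinAt F H (sphere 0 ε) p := by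
    refine HasFDerivWithinAt.mono ?_ hS
    rw [hH, hF]
    exact ((hu.1.fderivWithin hK (m := 1) le_rfl).differentiableOn one_ne_zero p
      hpK).hasFDerivWithinAt
  obtain ⟨hherm, hσ, htr⟩ := hu.hessianWithin_of_mem_ringSet hk hkn hK hpK
  rw [hessianWithin_eq_formMatrix hK hpK, ← hF, ← hH] at hherm hσ htr
  have hκa : κ ≤ F p p / ε ^ 2 := (le_div_iff₀ (by positivity)).2 hnormal
  have horth {w : Euc n} (hw : ⟪w, ε⁻¹ • p⟫ = 0) : ⟪p, w⟫ = 0 := by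
    rw [real_inner_smul_right, mul_eq_zero, inv_eq_zero] at hw
    rw [real_inner_comm]
    exact hw.resolve_left hε.ne'
  rw [iteratedFDerivWithin_two_apply _ hK hpK, ← hF]
  refine normal_bounds_of_tangential (ν := ε⁻¹ • p) hk hkn hherm hσ htr ?_ (hκ.trans_le hκa)
    (hκk.trans (by gcongr)) (fun w hw => ?_) fun w hw => ?_
  · rw [norm_smul, hp, norm_inv, Real.norm_of_nonneg hε.le, inv_mul_cancel₀ hε.ne']
  · have := sq_mul_hessian_tangential_eq hFS hHS hu.2.2.2 hp (horth hw)
    field_simp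
    linarith
  · have := mul_abs_hessian_tangential_normal_le hFS hHS hu.2.2.2 hp harc (horth hw)
    rw [map_smul, smul_eq_mul, abs_mul, abs_inv, abs_of_pos hε]
    field_simp
    linarith

theorem second_normal_derivative_mem_Icc (hu : IsSol k Ω₁ 0 ε M u) (hk : 1 ≤ k) (hkn : k ≤ n)
    (hΩo : IsOpen Ω₁) (hΩconv : Convex ℝ Ω₁) (hΩb : IsBounded Ω₁) (hε : 0 < ε)
    (hball : closedBall (0 : Euc n) ε ⊆ Ω₁)
    {g : ℝ} (hg : 0 < g) (hgk : n.choose k * g ^ k = 1) (hκ : g < κ)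
    {Λ M' r : ℝ} (hΛ : 0 ≤ Λ)
    (hΛu : ∀ x ∈ frontier Ω₁, ∀ y ∈ ringSet Ω₁ 0 ε, -(Λ * ‖y - x‖) ≤ u y)
    (hM : 0 ≤ M) (hM' : M' ≤ M)
    (hκM' : ∀ x ∈ frontier Ω₁, κ / 2 * (‖x‖ ^ 2 - ε ^ 2) ≤ M') (hr : ∀ x ∈ closure Ω₁, ‖x‖ ≤ r)
    (hC : 0 < C) (hΛC : Λ * r ≤ C * (M - M')) (hp : ‖p‖ = ε) :
    iteratedFDerivWithin ℝ 2 u (ringSet Ω₁ 0 ε) p ![ε⁻¹ • p, ε⁻¹ • p] ∈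
      Icc (-(n * (fderivWithin ℝ u (ringSet Ω₁ 0 ε) p p / ε ^ 2)))
        ((2 * C ^ 2 + 1 + 2 ^ (k - 1) * n.choose k) *
          (fderivWithin ℝ u (ringSet Ω₁ 0 ε) p p / ε ^ 2)) := by
  have hF (x : Euc n) (hx : x ∈ ringSet Ω₁ 0 ε) :=
    (hu.1.differentiableOn two_ne_zero x hx).hasFDerivWithinAt
  have hS (x : Euc n) (hx : x ∈ sphere 0 ε) : x ∈ ringSet Ω₁ 0 ε :=
    mem_ringSet_of_norm_eq hΩo hε hball (mem_sphere_zero_iff_norm.1 hx)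
  have hκ0 : 0 < κ := hg.trans hκ
  have hκk : 1 < n.choose k * κ ^ k := by
    have : (0 : ℝ) < n.choose k := by exact_mod_cast Nat.choose_pos hkn
    rw [← hgk]
    gcongr
  have hquad := hu.quadratic_sub_le hΩo hΩb hε hball hkn hκ0 hκk
    fun x hx => (hκM' x hx).trans hM'
  exact hu.second_normal_derivative_mem_Icc_of_circleArc hk hkn
    (uniqueDiffOn_ringSet hΩo hΩconv hε hball) hε hS hp rfl hκ0 hκk.le
    (hu.mul_sq_le_normal_derivative hΩo hε hball hquad
      (hF p (mem_ringSet_of_norm_eq hΩo hε hball hp)) hp)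
    fun τ hτ hpτ => hu.eventually_normal_derivative_le_circleArc hk hkn hΩo hΩb hε hball hF hg hgk
      hκ hΛ hΛu hM hM' hκM' hr hC hΛC hp hτ hpτ

end IsSol

end NormalBound

lemma underSol_zero_nonpos_iff {n k : ℕ} {ε M : ℝ} {x : Euc n} :
    underSol k 0 ε M x ≤ 0 ↔ (cnk n k)⁻¹ / 2 * (‖x‖ ^ 2 - ε ^ 2) ≤ M := by
  have hquad : underSol k 0 ε M x = (cnk n k)⁻¹ / 2 * (‖x‖ ^ 2 - ε ^ 2) - M := by
    rw [underSol, sub_zero]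
    ring
  rw [hquad, sub_nonpos]

end

theorem statement10_general {n k : ℕ} (hk : 1 ≤ k) (hkn : k ≤ n)
    (Ω₁ : Set (Euc n)) (hΩo : IsOpen Ω₁) (hΩconv : Convex ℝ Ω₁) (hΩb : IsBounded Ω₁)
    (ε₀ : ℝ) (hε₀ : 0 < ε₀) (hball : closedBall (0 : Euc n) ε₀ ⊆ Ω₁)
    (ψ : Euc n → ℝ) (hψ : ContDiffOn ℝ 2 ψ (closure Ω₁))
    (hψsol : ∀ x ∈ Ω₁, InGardingCone k (hessianWithin ψ (closure Ω₁) x) ∧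
      sigmaMat k (hessianWithin ψ (closure Ω₁) x) = 1)
    (hψfr : ∀ x ∈ frontier Ω₁, ψ x = 0)
    (M₁ : ℝ) (hM₁ : 0 < M₁)
    (hM₁sub : ∀ ε ∈ Ioo (0 : ℝ) ε₀, ∀ x ∈ frontier Ω₁, underSol k (0 : Euc n) ε M₁ x ≤ 0)
    (M : ℝ) (hM : M₁ < M) :
    ∃ C₁ C₂ : ℝ, 0 < C₁ ∧ 0 < C₂ ∧ ∀ ε ∈ Ioo (0 : ℝ) ε₀, ∀ u : Euc n → ℝ,
      IsSol k Ω₁ (0 : Euc n) ε M u → ∀ p ∈ sphere (0 : Euc n) ε,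
        -C₁ * fderivWithin ℝ u (ringSet Ω₁ (0 : Euc n) ε) p (ε⁻¹ • p) / ε ≤
            iteratedFDerivWithin ℝ 2 u (ringSet Ω₁ (0 : Euc n) ε) p ![ε⁻¹ • p, ε⁻¹ • p] ∧
          iteratedFDerivWithin ℝ 2 u (ringSet Ω₁ (0 : Euc n) ε) p ![ε⁻¹ • p, ε⁻¹ • p] ≤
            C₂ * fderivWithin ℝ u (ringSet Ω₁ (0 : Euc n) ε) p (ε⁻¹ • p) / ε := by
  have hM0 : 0 < M := hM₁.trans hM
  have hψsol' (x : Euc n) (hx : x ∈ Ω₁) : SolvesHessianEqAt k ψ x :=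
    solvesHessianEqAt_of_hessianWithin hψ (mem_of_superset (hΩo.mem_nhds hx) subset_closure)
      (hψsol x hx)
  obtain ⟨Λ, hΛ, hΛu⟩ :=
    exists_neg_mul_norm_sub_le hk hkn hΩo hΩconv hΩb hε₀.le hball hψ hψsol' hψfr hM0.le
  have hg : 0 < (cnk n k)⁻¹ := inv_pos.2 (cnk_pos hkn)
  have hgk := choose_mul_inv_cnk_pow hk hkn
  obtain ⟨κ, M', hκ, hM', hκM'⟩ := exists_quadratic_le_on_frontier hM₁ hM hg fun ε hε x hx =>
    underSol_zero_nonpos_iff.1 (hM₁sub ε hε x hx)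
  obtain ⟨r, hr⟩ := hΩb.closure.exists_norm_le
  have hr0 : 0 ≤ r :=
    (norm_nonneg 0).trans (hr 0 (subset_closure (hball (mem_closedBall_self hε₀.le))))
  have hMM' : 0 < M - M' := sub_pos.2 hM'
  have hC : Λ * r ≤ (Λ * r / (M - M') + 1) * (M - M') := by
    rw [← div_le_iff₀ hMM']
    exact (lt_add_one _).le
  refine ⟨n, 2 * (Λ * r / (M - M') + 1) ^ 2 + 1 + 2 ^ (k - 1) * n.choose k,
    by exact_mod_cast hk.trans hkn, by positivity, fun ε hε u hu p hp => ?_⟩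
  rw [neg_mul, neg_div, mul_div_assoc, mul_div_assoc, map_smul, smul_eq_mul, inv_mul_eq_div,
    div_div, ← sq]
  exact hu.second_normal_derivative_mem_Icc hk hkn hΩo hΩconv hΩb hε.1
    ((closedBall_subset_closedBall hε.2.le).trans hball) hg hgk hκ hΛ (hΛu ε hε u hu) hM0.le
    hM'.le (hκM' ε hε) hr (by positivity) hC (mem_sphere_zero_iff_norm.1 hp)

/-- `C²` bound on `∂B_ε(0)` in the double normal direction. -/
theorem statement10 {n k : ℕ} (hk : 1 ≤ k) (hkn : k ≤ n)
    (Ω₁ : Set (Euc n)) (hΩo : IsOpen Ω₁) (hΩconv : Convex ℝ Ω₁)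
    (hΩb : IsBounded Ω₁) (hΩs : HasSmoothBoundary Ω₁)
    (ε₀ : ℝ) (hε₀ : 0 < ε₀) (hball : closedBall (0 : Euc n) ε₀ ⊆ Ω₁)
    (ψ : Euc n → ℝ) (hψ : IsSol22 k Ω₁ ψ)
    (M₁ : ℝ) (hM₁ : 0 < M₁) (hM₁ψ : ∀ x ∈ closure Ω₁, -ψ x < M₁)
    (hM₁sub : ∀ ε ∈ Ioo (0:ℝ) ε₀, ∀ x ∈ frontier Ω₁, underSol k (0 : Euc n) ε M₁ x ≤ 0)
    (M : ℝ) (hM : M₁ < M)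
 :
    ∃ C₁ C₂ : ℝ, 0 < C₁ ∧ 0 < C₂ ∧ ∀ ε ∈ Ioo (0:ℝ) ε₀, ∀ u : Euc n → ℝ,
      IsSol k Ω₁ (0 : Euc n) ε M u → ∀ p ∈ sphere (0 : Euc n) ε,
        -C₁ * fderivWithin ℝ u (ringSet Ω₁ (0 : Euc n) ε) p (ε⁻¹ • p) / ε ≤
            iteratedFDerivWithin ℝ 2 u (ringSet Ω₁ (0 : Euc n) ε) p
              ![ε⁻¹ • p, ε⁻¹ • p] ∧
          iteratedFDerivWithin ℝ 2 u (ringSet Ω₁ (0 : Euc n) ε) p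
              ![ε⁻¹ • p, ε⁻¹ • p] ≤
            C₂ * fderivWithin ℝ u (ringSet Ω₁ (0 : Euc n) ε) p (ε⁻¹ • p) / ε :=
  statement10_general hk hkn Ω₁ hΩo hΩconv hΩb ε₀ hε₀ hball ψ
    (hψ.1.of_le (WithTop.coe_le_coe.2 le_top)) hψ.2.1 hψ.2.2 M₁ hM₁ hM₁sub M hM
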